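/- arXiv:2106.00094 — 6 statements merged into one kernel-verified Lean document; each statement's English description precedes it below -/
import Mathlib

section
/- Every γ ∈ Iw⁺_{GSp_{2g}} can be written uniquely as γ = ν·τ·ν' with ν ∈ U^{opp}_{GSp_{2g},1}, τ ∈ T_{GSp_{2g},0} and ν' ∈ U⁺_{GSp_{2g},0}, and conversely every such product lies in Iw⁺_{GSp_{2g}}. In particular Iw⁺_{GSp_{2g}} = U^{opp}_{GSp_{2g},1}·T_{GSp_{2g},0}·U⁺_{GSp_{2g},0}. -/
open Matrix

/-- The `g × g` anti-diagonal matrix `J̆`: the `(i, j)` entry is `1` exactly when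
`j = g + 1 - i` in one-based numbering, i.e. `i + j + 1 = g` in zero-based numbering. -/
def Jb (g : ℕ) (R : Type*) [CommRing R] : Matrix (Fin g) (Fin g) R :=
  Matrix.of fun i j => if (i : ℕ) + (j : ℕ) + 1 = g then 1 else 0

/-- The standard symplectic matrix `J = [[0, -J̆], [J̆, 0]]` of size `2g`. -/
def Jmat (g : ℕ) (R : Type*) [CommRing R] :
    Matrix (Fin g ⊕ Fin g) (Fin g ⊕ Fin g) R :=
  Matrix.fromBlocks 0 (-(Jb g R)) (Jb g R) 0

/-- Membership in the symplectic similitude group `GSp_{2g}(R)`: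
`ᵗγ J γ = ς · J` for some unit `ς` (the similitude factor). -/
def IsGSp {g : ℕ} {R : Type*} [CommRing R]
    (M : Matrix (Fin g ⊕ Fin g) (Fin g ⊕ Fin g) R) : Prop :=
  IsUnit M.det ∧ ∃ s : Rˣ, Mᵀ * Jmat g R * M = (s : R) • Jmat g R

/-- The linear position of an index of a `2g × 2g` matrix indexed by `Fin g ⊕ Fin g`. -/
def idx {g : ℕ} : Fin g ⊕ Fin g → ℕ :=
  Sum.elim (fun i => (i : ℕ)) fun i => g + (i : ℕ)

/-- The strict Iwahori subgroup `Iw⁺_{GSp_{2g}}` of `GSp_{2g}(ℤ_p)`: mod `p`, the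
lower-left block vanishes and the two diagonal blocks are diagonal. -/
def IwGSpPlus (p g : ℕ) [Fact p.Prime] :
    Set (Matrix (Fin g ⊕ Fin g) (Fin g ⊕ Fin g) ℤ_[p]) :=
  {M | IsGSp M ∧ (∀ i j : Fin g, (p : ℤ_[p]) ∣ M (Sum.inr i) (Sum.inl j)) ∧
    (∀ i j : Fin g, i ≠ j → (p : ℤ_[p]) ∣ M (Sum.inl i) (Sum.inl j)) ∧
    ∀ i j : Fin g, i ≠ j → (p : ℤ_[p]) ∣ M (Sum.inr i) (Sum.inr j)}

/-- `U^{opp}_{GSp_{2g},1}`: lower triangular matrices in `GSp_{2g}(ℤ_p)` with all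
diagonal entries equal to `1` that are congruent to the identity mod `p`. -/
def UGSpOpp1 (p g : ℕ) [Fact p.Prime] :
    Set (Matrix (Fin g ⊕ Fin g) (Fin g ⊕ Fin g) ℤ_[p]) :=
  {M | IsGSp M ∧ (∀ a b : Fin g ⊕ Fin g, idx a < idx b → M a b = 0) ∧
    (∀ a : Fin g ⊕ Fin g, M a a = 1) ∧
    ∀ a b : Fin g ⊕ Fin g,
      (p : ℤ_[p]) ∣ (M a b - (1 : Matrix (Fin g ⊕ Fin g) (Fin g ⊕ Fin g) ℤ_[p]) a b)}

/-- `T_{GSp_{2g},0}`: diagonal matrices in `GSp_{2g}(ℤ_p)`. -/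
def TGSp0 (p g : ℕ) [Fact p.Prime] :
    Set (Matrix (Fin g ⊕ Fin g) (Fin g ⊕ Fin g) ℤ_[p]) :=
  {M | IsGSp M ∧ ∀ a b : Fin g ⊕ Fin g, a ≠ b → M a b = 0}

/-- `U_{GSp_{2g},0}`: upper triangular unipotent matrices in `GSp_{2g}(ℤ_p)`. -/
def UGSp0 (p g : ℕ) [Fact p.Prime] :
    Set (Matrix (Fin g ⊕ Fin g) (Fin g ⊕ Fin g) ℤ_[p]) :=
  {M | IsGSp M ∧ (∀ a b : Fin g ⊕ Fin g, idx b < idx a → M a b = 0) ∧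
    ∀ a : Fin g ⊕ Fin g, M a a = 1}

/-- `U⁺_{GSp_{2g},0} := U_{GSp_{2g},0} ∩ Iw⁺_{GSp_{2g}}`. -/
def UGSp0Plus (p g : ℕ) [Fact p.Prime] :
    Set (Matrix (Fin g ⊕ Fin g) (Fin g ⊕ Fin g) ℤ_[p]) :=
  {M | M ∈ UGSp0 p g ∧ M ∈ IwGSpPlus p g}

/-!
Modulo `p`, an element `γ` of `Iw⁺` is upper triangular, so its diagonal entries are units and
`γ = L D U` for a unique lower unipotent `L`, diagonal `D` and upper unipotent `U`; uniqueness mod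
`p` gives `L ≡ 1`. The duality `X ↦ J⁻¹ ᵗX⁻¹ J` is multiplicative and preserves each of the three
types of factors, and `γ` is a similitude of factor `ς` exactly when it equals `ς` times its dual.
Hence `L D U = L* (ς D*) U*`, and uniqueness shows that each factor is a similitude. Since `L ≡ 1`
and `D` is diagonal with unit entries, the same entries vanish mod `p` in `γ` and in `U`, which
decides the membership of either in `Iw⁺`.
-/

section Triangular

variable {m α R S : Type*} [LinearOrder α] [CommRing R] [CommRing S] {b : m → α}

/-- `M` is unitriangular with respect to the weights `b`: entries `M i j` with `b j < b i` vanish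
and the diagonal entries are `1`. Upper unipotent matrices are obtained from an injective
order-preserving `b`, lower unipotent ones from `OrderDual.toDual ∘ b`. -/
structure IsUnitriangular (M : Matrix m m R) (b : m → α) : Prop where
  blockTriangular : M.BlockTriangular b
  apply_self : ∀ i, M i i = 1

lemma isDiag_of_blockTriangular {M : Matrix m m R} (hb : b.Injective)
    (hM : M.BlockTriangular b) (hM' : M.BlockTriangular (OrderDual.toDual ∘ b)) : M.IsDiag :=
  fun _ _ hij => (hb.ne hij).lt_or_gt.elim (fun h => hM' h) fun h => hM h

lemma blockTriangular_of_isDiag {M : Matrix m m R} (hM : M.IsDiag) : M.BlockTriangular b :=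
  fun _ _ hij => hM (ne_of_apply_ne b hij.ne')

lemma IsUnitriangular.map {M : Matrix m m R} (hM : IsUnitriangular M b) (φ : R →+* S) :
    IsUnitriangular (M.map φ) b where
  blockTriangular := hM.blockTriangular.map φ
  apply_self i := by rw [map_apply, hM.apply_self, map_one]

lemma blockTriangular_mul_apply_self [Fintype m] {M N : Matrix m m R} (hb : b.Injective)
    (hM : M.BlockTriangular b) (hN : N.BlockTriangular b) (i : m) :
    (M * N) i i = M i i * N i i := by
  rw [mul_apply]
  refine Finset.sum_eq_single i (fun j _ hji => ?_) (by simp)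
  rcases (hb.ne hji).lt_or_gt with h | h
  · rw [hM h, zero_mul]
  · rw [hN h, mul_zero]

lemma IsUnitriangular.mul [Fintype m] {M N : Matrix m m R} (hb : b.Injective)
    (hM : IsUnitriangular M b) (hN : IsUnitriangular N b) : IsUnitriangular (M * N) b where
  blockTriangular := hM.blockTriangular.mul hN.blockTriangular
  apply_self i := by
    rw [blockTriangular_mul_apply_self hb hM.blockTriangular hN.blockTriangular,
      hM.apply_self, hN.apply_self, one_mul]

variable [DecidableEq m]

lemma IsUnitriangular.eq_one_of_blockTriangular {M : Matrix m m R} (hb : b.Injective)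
    (hM : IsUnitriangular M (OrderDual.toDual ∘ b)) (hM' : M.BlockTriangular b) : M = 1 := by
  rw [← (isDiag_of_blockTriangular hb hM' hM.blockTriangular).diagonal_diag, ← diagonal_one]
  exact congrArg diagonal (funext hM.apply_self)

variable [Fintype m]

lemma det_eq_prod_of_blockTriangular {M : Matrix m m R} (hb : b.Injective)
    (hM : M.BlockTriangular b) : M.det = ∏ i, M i i := by
  let _ : LinearOrder m := LinearOrder.lift' b hb
  exact det_of_isUpperTriangular hM

lemma isUnit_det_iff_of_map_blockTriangular (φ : R →+* S) [IsLocalHom φ] {M : Matrix m m R}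
    (hb : b.Injective) (hM : (M.map φ).BlockTriangular b) :
    IsUnit M.det ↔ ∀ i, IsUnit (M i i) := by
  rw [← isUnit_map_iff φ, φ.map_det, RingHom.mapMatrix_apply,
    det_eq_prod_of_blockTriangular hb hM, IsUnit.prod_univ_iff]
  simp only [map_apply, isUnit_map_iff]

lemma isUnit_det_iff_of_blockTriangular {M : Matrix m m R} (hb : b.Injective)
    (hM : M.BlockTriangular b) : IsUnit M.det ↔ ∀ i, IsUnit (M i i) :=
  isUnit_det_iff_of_map_blockTriangular (RingHom.id R) hb hM

lemma blockTriangular_inv {M : Matrix m m R} (hdet : IsUnit M.det) (hM : M.BlockTriangular b) :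
    M⁻¹.BlockTriangular b := by
  let _ := M.invertibleOfIsUnitDet hdet
  exact blockTriangular_inv_of_blockTriangular hM

lemma isDiag_inv {M : Matrix m m R} (hM : M.IsDiag) : M⁻¹.IsDiag := by
  rw [← hM.diagonal_diag, inv_diagonal]
  exact isDiag_diagonal _

lemma IsUnitriangular.isUnit_det {M : Matrix m m R} (hb : b.Injective)
    (hM : IsUnitriangular M b) : IsUnit M.det :=
  (isUnit_det_iff_of_blockTriangular hb hM.blockTriangular).2 fun i => by simp [hM.apply_self]

lemma IsUnitriangular.inv {M : Matrix m m R} (hb : b.Injective) (hM : IsUnitriangular M b) :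
    IsUnitriangular M⁻¹ b := by
  have hdet := hM.isUnit_det hb
  have hinv := blockTriangular_inv hdet hM.blockTriangular
  refine ⟨hinv, fun i => ?_⟩
  simpa [M.mul_nonsing_inv hdet, hM.apply_self] using
    (blockTriangular_mul_apply_self hb hM.blockTriangular hinv i).symm

lemma diag_mul_unitriangular_unique {D D' U U' : Matrix m m R} (hD : D.IsDiag) (hD' : D'.IsDiag)
    (hU : ∀ i, U i i = 1) (hU' : ∀ i, U' i i = 1) (hdet : IsUnit D.det)
    (h : D * U = D' * U') : D = D' ∧ U = U' := by
  obtain rfl : D = D' := by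
    rw [← hD.diagonal_diag, ← hD'.diagonal_diag] at h ⊢
    congr 1
    ext i
    simpa [diagonal_mul, hU, hU'] using congrFun₂ h i i
  exact ⟨rfl, ((isUnit_iff_isUnit_det _).2 hdet).mul_left_cancel h⟩

theorem lower_mul_diag_mul_upper_unique {L L' D D' U U' : Matrix m m R} (hb : b.Injective)
    (hL : IsUnitriangular L (OrderDual.toDual ∘ b))
    (hL' : IsUnitriangular L' (OrderDual.toDual ∘ b)) (hD : D.IsDiag) (hD' : D'.IsDiag)
    (hU : IsUnitriangular U b) (hU' : IsUnitriangular U' b) (hdet : IsUnit D.det)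
    (h : L * D * U = L' * D' * U') : L = L' ∧ D = D' ∧ U = U' := by
  have upper {D U : Matrix m m R} (hD : D.IsDiag) (hU : IsUnitriangular U b) :
      (D * U).BlockTriangular b := (blockTriangular_of_isDiag hD).mul hU.blockTriangular
  have hb' : (OrderDual.toDual ∘ b).Injective := hb
  have hdetL' : IsUnit L'.det := hL'.isUnit_det hb'
  have hdetDU : IsUnit (D * U).det := by
    rw [det_mul]
    exact hdet.mul (hU.isUnit_det hb)
  rw [Matrix.mul_assoc, Matrix.mul_assoc] at h
  have hquot : L'⁻¹ * L = D' * U' * (D * U)⁻¹ := by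
    rw [← mul_nonsing_inv_cancel_right (D * U) (L'⁻¹ * L) hdetDU, Matrix.mul_assoc _ L, h,
      nonsing_inv_mul_cancel_left _ _ hdetL']
  have hone : L'⁻¹ * L = 1 := by
    refine ((hL'.inv hb').mul hb' hL).eq_one_of_blockTriangular hb ?_
    rw [hquot]
    exact (upper hD' hU').mul (blockTriangular_inv hdetDU (upper hD hU))
  obtain rfl : L' = L := by
    rw [← mul_nonsing_inv_cancel_left L' L hdetL', hone, Matrix.mul_one]
  exact ⟨rfl, diag_mul_unitriangular_unique hD hD' hU.apply_self hU'.apply_self hdet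
    (((isUnit_iff_isUnit_det _).2 hdetL').mul_left_cancel h)⟩

lemma exists_diag_mul_unitriangular {B : Matrix m m R} (hb : b.Injective)
    (hB : B.BlockTriangular b) (hdet : IsUnit B.det) :
    ∃ D U : Matrix m m R, D.IsDiag ∧ IsUnitriangular U b ∧ B = D * U := by
  choose u hu using (isUnit_det_iff_of_blockTriangular hb hB).1 hdet
  refine ⟨diagonal fun i => (u i : R), diagonal (fun i => ((u i)⁻¹ : Rˣ).val) * B,
    isDiag_diagonal _, ⟨(blockTriangular_diagonal _).mul hB, fun i => ?_⟩, ?_⟩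
  · rw [diagonal_mul, ← hu, Units.inv_mul]
  · simp [← Matrix.mul_assoc, diagonal_mul_diagonal]

lemma exists_lower_mul_blockTriangular (φ : R →+* S) [IsLocalHom φ] {M : Matrix m m R}
    (hb : b.Injective) (hM : (M.map φ).BlockTriangular b) (hdet : IsUnit M.det) :
    ∃ N : Matrix m m R, IsUnitriangular N (OrderDual.toDual ∘ b) ∧ (N * M).BlockTriangular b := by
  -- The conditions on row `i` of `N` (through `N * M` in the columns `b k < b i`, directly in the
  -- others) amount to `N i ᵥ* A i = 1 i`, and `A i` is invertible since `φ` makes it triangular.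
  let A (i : m) : Matrix m m R := of fun j k => if b k < b i then M j k else (1 : Matrix m m R) j k
  have hA (i : m) : IsUnit (A i).det := by
    refine (isUnit_det_iff_of_map_blockTriangular φ hb fun j k hkj => ?_).2 fun j => ?_
    · by_cases hki : b k < b i
      · simpa [A, hki] using hM hkj
      · simp [A, hki, one_apply_ne (ne_of_apply_ne b hkj.ne')]
    · by_cases hji : b j < b i
      · simpa [A, hji] using (isUnit_det_iff_of_map_blockTriangular φ hb hM).1 hdet j
      · simp [A, hji]
  let N : Matrix m m R := of fun i => (A i)⁻¹ i
  have hN (i k : m) :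
      (if b k < b i then (N * M) i k else N i k) = (1 : Matrix m m R) i k := by
    rw [← nonsing_inv_mul (A i) (hA i)]
    by_cases hki : b k < b i <;> simp [A, N, mul_apply, hki, one_apply]
  refine ⟨N, ⟨fun i k hik => ?_, fun i => by simpa using hN i i⟩, fun i k hki => ?_⟩
  · have hik' : b i < b k := hik
    simpa [hik'.not_gt, one_apply_ne (ne_of_apply_ne b hik'.ne)] using hN i k
  · simpa [hki, one_apply_ne (ne_of_apply_ne b hki.ne')] using hN i k

lemma exists_lower_mul_diag_mul_upper (φ : R →+* S) [IsLocalHom φ] {M : Matrix m m R}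
    (hb : b.Injective) (hM : (M.map φ).BlockTriangular b) (hdet : IsUnit M.det) :
    ∃ L D U : Matrix m m R, IsUnitriangular L (OrderDual.toDual ∘ b) ∧ D.IsDiag ∧
      IsUnitriangular U b ∧ M = L * D * U := by
  obtain ⟨N, hN, hNM⟩ := exists_lower_mul_blockTriangular φ hb hM hdet
  have hb' : (OrderDual.toDual ∘ b).Injective := hb
  have hdetN : IsUnit N.det := hN.isUnit_det hb'
  obtain ⟨D, U, hD, hU, hDU⟩ :=
    exists_diag_mul_unitriangular hb hNM (by rw [det_mul]; exact hdetN.mul hdet)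
  refine ⟨N⁻¹, D, U, hN.inv hb', hD, hU, ?_⟩
  rw [Matrix.mul_assoc, ← hDU, nonsing_inv_mul_cancel_left _ _ hdetN]

lemma map_lower_eq_one_of_blockTriangular {φ : R →+* S} {L D U : Matrix m m R} (hb : b.Injective)
    (hL : IsUnitriangular L (OrderDual.toDual ∘ b)) (hD : D.IsDiag) (hU : IsUnitriangular U b)
    (hdet : IsUnit D.det) (h : ((L * D * U).map φ).BlockTriangular b) : L.map φ = 1 := by
  have hdetDU : IsUnit ((D * U).map φ).det := by
    rw [← RingHom.mapMatrix_apply, ← φ.map_det, det_mul]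
    exact (hdet.mul (hU.isUnit_det hb)).map φ
  have hupper : ((D * U).map φ).BlockTriangular b :=
    ((blockTriangular_of_isDiag hD).mul hU.blockTriangular).map φ
  rw [Matrix.mul_assoc, Matrix.map_mul] at h
  refine (hL.map φ).eq_one_of_blockTriangular hb ?_
  rw [← mul_nonsing_inv_cancel_right _ (L.map φ) hdetDU]
  exact h.mul (blockTriangular_inv hdetDU hupper)

lemma map_lower_mul_diag_mul_apply_eq_zero_iff {φ : R →+* S} {L D U : Matrix m m R}
    (hL : L.map φ = 1) (hD : D.IsDiag) (hdet : IsUnit D.det) (i j : m) :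
    φ ((L * D * U) i j) = 0 ↔ φ (U i j) = 0 := by
  have hunit : IsUnit (φ (D i i)) := by
    rw [← hD.diagonal_diag, det_diagonal, IsUnit.prod_univ_iff] at hdet
    exact (hdet i).map φ
  have hentry : φ ((L * D * U) i j) = φ (D i i) * φ (U i j) := by
    rw [← hD.diagonal_diag, ← map_apply (f := φ), Matrix.mul_assoc, Matrix.map_mul, hL,
      Matrix.one_mul, map_apply, diagonal_mul, map_mul, diagonal_apply_eq]
  rw [hentry, hunit.mul_right_eq_zero]

end Triangular

section Symplectic

variable {g : ℕ} {R : Type*} [CommRing R]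

lemma idx_injective : (idx : Fin g ⊕ Fin g → ℕ).Injective := by
  rintro (i | i) (j | j) h <;> simp only [idx, Sum.elim_inl, Sum.elim_inr] at h
  · exact congrArg Sum.inl (Fin.ext h)
  · omega
  · omega
  · exact congrArg Sum.inr (Fin.ext (by omega))

/-- The index paired with a given one by the symplectic form: it exchanges the positions `k` and
`2g + 1 - k` in one-based numbering. -/
def dualIdx : Fin g ⊕ Fin g → Fin g ⊕ Fin g :=
  Sum.elim (fun i => Sum.inr i.rev) fun i => Sum.inl i.rev

/-- The nonzero entry of row `a` of `Jmat`, which sits in column `dualIdx a`. -/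
def dualSign (R : Type*) [CommRing R] : Fin g ⊕ Fin g → R :=
  Sum.elim (fun _ => -1) fun _ => 1

lemma dualIdx_involutive : (dualIdx : Fin g ⊕ Fin g → Fin g ⊕ Fin g).Involutive := by
  rintro (i | i) <;> simp [dualIdx]

lemma idx_dualIdx_add_idx (a : Fin g ⊕ Fin g) : idx (dualIdx a) + idx a + 1 = 2 * g := by
  rcases a with i | i <;>
    simp only [idx, dualIdx, Sum.elim_inl, Sum.elim_inr, Fin.val_rev] <;> omega

lemma dualSign_mul_self (a : Fin g ⊕ Fin g) : dualSign R a * dualSign R a = 1 := by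
  rcases a with _ | _ <;> simp [dualSign]

lemma dualSign_dualIdx (a : Fin g ⊕ Fin g) : dualSign R (dualIdx a) = -dualSign R a := by
  rcases a with _ | _ <;> simp [dualSign, dualIdx]

lemma Jmat_apply (a b : Fin g ⊕ Fin g) :
    Jmat g R a b = if b = dualIdx a then dualSign R a else 0 := by
  have hrev (i j : Fin g) : (i : ℕ) + j + 1 = g ↔ j = i.rev := by
    rw [Fin.ext_iff, Fin.val_rev]
    omega
  rcases a with i | i <;> rcases b with j | j <;>
    simp [Jmat, Jb, dualIdx, dualSign, hrev, neg_ite]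

lemma Jmat_mul_mul_Jmat_apply (X : Matrix (Fin g ⊕ Fin g) (Fin g ⊕ Fin g) R)
    (a b : Fin g ⊕ Fin g) : (Jmat g R * X * Jmat g R) a b =
      -(dualSign R a * dualSign R b * X (dualIdx a) (dualIdx b)) := by
  have hdual (c) : b = dualIdx c ↔ c = dualIdx b := by
    rw [eq_comm, dualIdx_involutive.eq_iff, eq_comm]
  calc (Jmat g R * X * Jmat g R) a b
      = dualSign R a * X (dualIdx a) (dualIdx b) * dualSign R (dualIdx b) := by
        simp [mul_apply, Jmat_apply, hdual]
    _ = -(dualSign R a * dualSign R b * X (dualIdx a) (dualIdx b)) := by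
        rw [dualSign_dualIdx]
        ring

lemma Jmat_mul_Jmat : Jmat g R * Jmat g R = -1 := by
  ext a b
  have h := Jmat_mul_mul_Jmat_apply (1 : Matrix (Fin g ⊕ Fin g) (Fin g ⊕ Fin g) R) a b
  rw [Matrix.mul_one] at h
  rw [h, Matrix.neg_apply]
  obtain rfl | hab := eq_or_ne a b
  · rw [dualSign_mul_self, one_apply_eq, one_apply_eq, mul_one]
  · rw [one_apply_ne (dualIdx_involutive.injective.ne hab), one_apply_ne hab, mul_zero]

lemma isUnit_Jmat : IsUnit (Jmat g R) :=
  IsUnit.of_mul_eq_one (-Jmat g R) (by rw [mul_neg, Jmat_mul_Jmat, neg_neg])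

/-- The symplectic dual `J⁻¹ ᵗX⁻¹ J`, written with `J⁻¹ = -J`; an invertible `X` is a similitude of
factor `s` exactly when it equals `s` times its dual. Junk unless `X` is invertible. -/
noncomputable def symplecticDual (X : Matrix (Fin g ⊕ Fin g) (Fin g ⊕ Fin g) R) :
    Matrix (Fin g ⊕ Fin g) (Fin g ⊕ Fin g) R :=
  -(Jmat g R * (X⁻¹)ᵀ * Jmat g R)

variable {X Y : Matrix (Fin g ⊕ Fin g) (Fin g ⊕ Fin g) R}

lemma symplecticDual_apply (a b : Fin g ⊕ Fin g) :
    symplecticDual X a b = dualSign R a * dualSign R b * X⁻¹ (dualIdx b) (dualIdx a) := by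
  rw [symplecticDual, Matrix.neg_apply, Jmat_mul_mul_Jmat_apply, neg_neg, transpose_apply]

lemma symplecticDual_mul : symplecticDual (X * Y) = symplecticDual X * symplecticDual Y := by
  calc symplecticDual (X * Y)
      = Jmat g R * (X⁻¹)ᵀ * (-1) * ((Y⁻¹)ᵀ * Jmat g R) := by
        simp only [symplecticDual, Matrix.mul_inv_rev, transpose_mul, Matrix.mul_assoc,
          Matrix.neg_mul, Matrix.mul_neg, Matrix.one_mul]
    _ = symplecticDual X * symplecticDual Y := by
        simp only [← Jmat_mul_Jmat, symplecticDual, neg_mul_neg, Matrix.mul_assoc]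

lemma transpose_mul_Jmat_mul_eq_smul_iff (hX : IsUnit X.det) (s : R) :
    Xᵀ * Jmat g R * X = s • Jmat g R ↔ X = s • symplecticDual X := by
  have hunit : IsUnit (Jmat g R * (X⁻¹)ᵀ) :=
    isUnit_Jmat.mul ((isUnit_iff_isUnit_det _).2 (by simpa [det_transpose] using hX))
  have hcancel : (X⁻¹)ᵀ * Xᵀ = 1 := by
    rw [← transpose_mul, mul_nonsing_inv _ hX, transpose_one]
  have hleft : Jmat g R * (X⁻¹)ᵀ * (Xᵀ * Jmat g R * X) = -X := by
    calc Jmat g R * (X⁻¹)ᵀ * (Xᵀ * Jmat g R * X)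
        = Jmat g R * ((X⁻¹)ᵀ * Xᵀ) * Jmat g R * X := by simp only [Matrix.mul_assoc]
      _ = -X := by rw [hcancel, Matrix.mul_one, Jmat_mul_Jmat, Matrix.neg_mul, Matrix.one_mul]
  have hright : Jmat g R * (X⁻¹)ᵀ * (s • Jmat g R) = -(s • symplecticDual X) := by
    rw [symplecticDual, smul_neg, neg_neg, Matrix.mul_smul]
  rw [← hunit.mul_right_inj, hleft, hright, neg_inj]

lemma isGSp_iff : IsGSp X ↔ IsUnit X.det ∧ ∃ s : Rˣ, X = (s : R) • symplecticDual X :=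
  and_congr_right fun hX => exists_congr fun s => transpose_mul_Jmat_mul_eq_smul_iff hX s

lemma IsGSp.mul (hX : IsGSp X) (hY : IsGSp Y) : IsGSp (X * Y) := by
  rw [isGSp_iff] at *
  obtain ⟨hdetX, s, hs⟩ := hX
  obtain ⟨hdetY, t, ht⟩ := hY
  refine ⟨by rw [det_mul]; exact hdetX.mul hdetY, s * t, ?_⟩
  rw [symplecticDual_mul, Units.val_mul, mul_smul, ← Matrix.mul_smul, ← Matrix.smul_mul, ← hs, ← ht]

lemma idx_dualIdx_lt {a b : Fin g ⊕ Fin g} (h : idx a < idx b) :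
    idx (dualIdx b) < idx (dualIdx a) := by
  have := idx_dualIdx_add_idx a
  have := idx_dualIdx_add_idx b
  omega

lemma isDiag_symplecticDual (hX : X.IsDiag) : (symplecticDual X).IsDiag := by
  intro a b hab
  have hinv : X⁻¹ (dualIdx b) (dualIdx a) = 0 :=
    isDiag_inv hX (dualIdx_involutive.injective.ne hab.symm)
  change symplecticDual X a b = 0
  rw [symplecticDual_apply, hinv, mul_zero]

lemma IsUnitriangular.symplecticDual_upper (hX : IsUnitriangular X idx) :
    IsUnitriangular (symplecticDual X) idx where
  blockTriangular a b hba := by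
    rw [symplecticDual_apply, (hX.inv idx_injective).blockTriangular (idx_dualIdx_lt hba), mul_zero]
  apply_self a := by
    rw [symplecticDual_apply, (hX.inv idx_injective).apply_self, dualSign_mul_self, one_mul]

lemma IsUnitriangular.symplecticDual_lower (hX : IsUnitriangular X (OrderDual.toDual ∘ idx)) :
    IsUnitriangular (symplecticDual X) (OrderDual.toDual ∘ idx) := by
  have hidx : (OrderDual.toDual ∘ idx : Fin g ⊕ Fin g → ℕᵒᵈ).Injective := idx_injective
  have hinv := hX.inv hidx
  refine ⟨fun a b hba => ?_, fun a => ?_⟩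
  · have hzero : X⁻¹ (dualIdx b) (dualIdx a) = 0 :=
      hinv.blockTriangular (idx_dualIdx_lt (a := a) (b := b) hba)
    rw [symplecticDual_apply, hzero, mul_zero]
  · rw [symplecticDual_apply, hinv.apply_self, dualSign_mul_self, one_mul]

theorem IsGSp.of_lower_mul_diag_mul_upper {L D U : Matrix (Fin g ⊕ Fin g) (Fin g ⊕ Fin g) R}
    (h : IsGSp (L * D * U)) (hL : IsUnitriangular L (OrderDual.toDual ∘ idx)) (hD : D.IsDiag)
    (hU : IsUnitriangular U idx) : IsGSp L ∧ IsGSp D ∧ IsGSp U := by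
  obtain ⟨hdet, s, hs⟩ := isGSp_iff.1 h
  rw [det_mul, det_mul, IsUnit.mul_iff, IsUnit.mul_iff] at hdet
  obtain ⟨⟨hdetL, hdetD⟩, hdetU⟩ := hdet
  rw [symplecticDual_mul, symplecticDual_mul, ← Matrix.smul_mul, ← Matrix.mul_smul] at hs
  obtain ⟨hfixL, hfixD, hfixU⟩ :=
    lower_mul_diag_mul_upper_unique idx_injective hL hL.symplecticDual_lower hD
      ((isDiag_symplecticDual hD).smul _) hU hU.symplecticDual_upper hdetD hs
  exact ⟨isGSp_iff.2 ⟨hdetL, 1, by simpa using hfixL⟩, isGSp_iff.2 ⟨hdetD, s, hfixD⟩,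
    isGSp_iff.2 ⟨hdetU, 1, by simpa using hfixU⟩⟩

end Symplectic

section Iwahori

variable {p g : ℕ} [Fact p.Prime] {M N : Matrix (Fin g ⊕ Fin g) (Fin g ⊕ Fin g) ℤ_[p]}

instance isLocalHom_toZMod : IsLocalHom (PadicInt.toZMod : ℤ_[p] →+* ZMod p) :=
  .of_surjective _ (ZMod.ringHom_surjective _)

lemma toZMod_eq_zero_iff_dvd (x : ℤ_[p]) : PadicInt.toZMod x = 0 ↔ (p : ℤ_[p]) ∣ x := by
  rw [← RingHom.mem_ker, PadicInt.ker_toZMod, PadicInt.maximalIdeal_eq_span_p,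
    Ideal.mem_span_singleton]

lemma mem_UGSpOpp1_iff : M ∈ UGSpOpp1 p g ↔
    IsGSp M ∧ IsUnitriangular M (OrderDual.toDual ∘ idx) ∧ M.map PadicInt.toZMod = 1 := by
  have hcongr : (∀ a b, (p : ℤ_[p]) ∣ M a b - (1 : Matrix _ _ ℤ_[p]) a b) ↔
      M.map PadicInt.toZMod = 1 := by
    simp only [← toZMod_eq_zero_iff_dvd, map_sub, sub_eq_zero, ← Matrix.ext_iff, map_apply,
      one_apply, apply_ite PadicInt.toZMod, map_one, map_zero]
  rw [← hcongr]
  exact ⟨fun ⟨hG, hlow, hdiag, hp⟩ => ⟨hG, ⟨fun a b => hlow a b, hdiag⟩, hp⟩,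
    fun ⟨hG, hM, hp⟩ => ⟨hG, fun _ _ h => hM.blockTriangular h, hM.apply_self, hp⟩⟩

lemma mem_TGSp0_iff : M ∈ TGSp0 p g ↔ IsGSp M ∧ M.IsDiag :=
  Iff.rfl

lemma mem_UGSp0_iff : M ∈ UGSp0 p g ↔ IsGSp M ∧ IsUnitriangular M idx :=
  ⟨fun ⟨hG, hup, hdiag⟩ => ⟨hG, fun a b => hup a b, hdiag⟩,
    fun ⟨hG, hM⟩ => ⟨hG, fun _ _ h => hM.blockTriangular h, hM.apply_self⟩⟩

lemma map_toZMod_blockTriangular_of_mem_IwGSpPlus (hM : M ∈ IwGSpPlus p g) :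
    (M.map PadicInt.toZMod).BlockTriangular idx := by
  obtain ⟨-, hc, ha, hd⟩ := hM
  intro a b hba
  refine (toZMod_eq_zero_iff_dvd _).2 ?_
  have hab : a ≠ b := ne_of_apply_ne idx hba.ne'
  rcases a with i | i <;> rcases b with j | j
  · exact ha i j (ne_of_apply_ne _ hab)
  · simp only [idx, Sum.elim_inl, Sum.elim_inr] at hba
    omega
  · exact hc i j
  · exact hd i j (ne_of_apply_ne _ hab)

lemma mem_IwGSpPlus_congr (hM : IsGSp M) (hN : IsGSp N)
    (h : ∀ a b, PadicInt.toZMod (M a b) = 0 ↔ PadicInt.toZMod (N a b) = 0) :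
    M ∈ IwGSpPlus p g ↔ N ∈ IwGSpPlus p g := by
  simp only [toZMod_eq_zero_iff_dvd] at h
  simp only [IwGSpPlus, Set.mem_ofPred_eq, hM, hN, h]

lemma mul_mem_IwGSpPlus_iff {ν τ ν' : Matrix (Fin g ⊕ Fin g) (Fin g ⊕ Fin g) ℤ_[p]}
    (hν : ν ∈ UGSpOpp1 p g) (hτ : τ ∈ TGSp0 p g) (hν' : IsGSp ν') :
    ν * τ * ν' ∈ IwGSpPlus p g ↔ ν' ∈ IwGSpPlus p g := by
  obtain ⟨hGν, -, hνp⟩ := mem_UGSpOpp1_iff.1 hν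
  obtain ⟨hGτ, hτdiag⟩ := mem_TGSp0_iff.1 hτ
  exact mem_IwGSpPlus_congr ((hGν.mul hGτ).mul hν') hν'
    (map_lower_mul_diag_mul_apply_eq_zero_iff hνp hτdiag hGτ.1)

theorem exists_factorization_of_mem_IwGSpPlus (hM : M ∈ IwGSpPlus p g) :
    ∃ ν ∈ UGSpOpp1 p g, ∃ τ ∈ TGSp0 p g, ∃ ν' ∈ UGSp0Plus p g, M = ν * τ * ν' := by
  have hMp := map_toZMod_blockTriangular_of_mem_IwGSpPlus hM
  obtain ⟨ν, τ, ν', hν, hτ, hν', rfl⟩ :=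
    exists_lower_mul_diag_mul_upper PadicInt.toZMod idx_injective hMp hM.1.1
  obtain ⟨hGν, hGτ, hGν'⟩ := hM.1.of_lower_mul_diag_mul_upper hν hτ hν'
  have hνp := map_lower_eq_one_of_blockTriangular idx_injective hν hτ hν' hGτ.1 hMp
  have hmemν : ν ∈ UGSpOpp1 p g := mem_UGSpOpp1_iff.2 ⟨hGν, hν, hνp⟩
  have hmemτ : τ ∈ TGSp0 p g := mem_TGSp0_iff.2 ⟨hGτ, hτ⟩
  exact ⟨ν, hmemν, τ, hmemτ, ν', ⟨mem_UGSp0_iff.2 ⟨hGν', hν'⟩,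
    (mul_mem_IwGSpPlus_iff hmemν hmemτ hGν').1 hM⟩, rfl⟩

theorem factorization_unique {ν₁ ν₂ τ₁ τ₂ ν₁' ν₂' : Matrix (Fin g ⊕ Fin g) (Fin g ⊕ Fin g) ℤ_[p]}
    (hν₁ : ν₁ ∈ UGSpOpp1 p g) (hν₂ : ν₂ ∈ UGSpOpp1 p g) (hτ₁ : τ₁ ∈ TGSp0 p g)
    (hτ₂ : τ₂ ∈ TGSp0 p g) (hν₁' : ν₁' ∈ UGSp0 p g) (hν₂' : ν₂' ∈ UGSp0 p g)
    (h : ν₁ * τ₁ * ν₁' = ν₂ * τ₂ * ν₂') : ν₁ = ν₂ ∧ τ₁ = τ₂ ∧ ν₁' = ν₂' :=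
  lower_mul_diag_mul_upper_unique idx_injective (mem_UGSpOpp1_iff.1 hν₁).2.1
    (mem_UGSpOpp1_iff.1 hν₂).2.1 hτ₁.2 hτ₂.2 (mem_UGSp0_iff.1 hν₁').2 (mem_UGSp0_iff.1 hν₂').2
    hτ₁.1.1 h

end Iwahori

theorem statement2 (p g : ℕ) [Fact p.Prime] (hg : 1 ≤ g) :
    (∀ M ∈ IwGSpPlus p g,
      ∃! T : Matrix (Fin g ⊕ Fin g) (Fin g ⊕ Fin g) ℤ_[p] ×
          Matrix (Fin g ⊕ Fin g) (Fin g ⊕ Fin g) ℤ_[p] ×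
          Matrix (Fin g ⊕ Fin g) (Fin g ⊕ Fin g) ℤ_[p],
        T.1 ∈ UGSpOpp1 p g ∧ T.2.1 ∈ TGSp0 p g ∧ T.2.2 ∈ UGSp0Plus p g ∧
          M = T.1 * T.2.1 * T.2.2) ∧
    ∀ ν ∈ UGSpOpp1 p g, ∀ τ ∈ TGSp0 p g, ∀ ν' ∈ UGSp0Plus p g,
      ν * τ * ν' ∈ IwGSpPlus p g := by
  refine ⟨fun M hM => ?_, fun ν hν τ hτ ν' hν' => (mul_mem_IwGSpPlus_iff hν hτ hν'.1.1).2 hν'.2⟩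
  obtain ⟨ν, hν, τ, hτ, ν', hν', rfl⟩ := exists_factorization_of_mem_IwGSpPlus hM
  refine ⟨(ν, τ, ν'), ⟨hν, hτ, hν', rfl⟩, ?_⟩
  rintro ⟨ν₁, τ₁, ν₁'⟩ ⟨hν₁, hτ₁, hν₁', h⟩
  obtain ⟨rfl, rfl, rfl⟩ := factorization_unique hν hν₁ hτ hτ₁ hν'.1 hν₁'.1 h
  rfl
end

section
/- For every w ∈ ℚ_{>0} one has the equalities of subsets of M_g(O_C): Iw^{(w)}_{GL_g} = U^{opp,(w)}_{GL_g,1}·T^{(w)}_{GL_g,0}·U^{(w)}_{GL_g,0} and Iw^{+,(w)}_{GL_g} = U^{opp,(w)}_{GL_g,1}·T^{(w)}_{GL_g,0}·U^{(w)}_{GL_g,1}. -/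
open Matrix

/-- The Iwahori subgroup `Iw_{GL_g}` of `GL_g(ℤ_p)`: invertible matrices over `ℤ_p`
whose reduction mod `p` is upper triangular. -/
def IwGL (p g : ℕ) [Fact p.Prime] : Set (Matrix (Fin g) (Fin g) ℤ_[p]) :=
  {M | IsUnit M.det ∧ ∀ i j : Fin g, j < i → (p : ℤ_[p]) ∣ M i j}

/-- The strict Iwahori subgroup `Iw⁺_{GL_g}` of `GL_g(ℤ_p)`: reduction mod `p` is diagonal. -/
def IwGLplus (p g : ℕ) [Fact p.Prime] : Set (Matrix (Fin g) (Fin g) ℤ_[p]) :=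
  {M | IsUnit M.det ∧ ∀ i j : Fin g, i ≠ j → (p : ℤ_[p]) ∣ M i j}

/-- `T_{GL_g,0}`: diagonal matrices in `GL_g(ℤ_p)`. -/
def TGL (p g : ℕ) [Fact p.Prime] : Set (Matrix (Fin g) (Fin g) ℤ_[p]) :=
  {M | IsUnit M.det ∧ ∀ i j : Fin g, i ≠ j → M i j = 0}

/-- `U_{GL_g,0}`: upper triangular unipotent matrices in `GL_g(ℤ_p)`. -/
def UGL0 (p g : ℕ) [Fact p.Prime] : Set (Matrix (Fin g) (Fin g) ℤ_[p]) :=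
  {M | (∀ i j : Fin g, j < i → M i j = 0) ∧ ∀ i : Fin g, M i i = 1}

/-- `U_{GL_g,1}`: upper triangular unipotent matrices congruent to `1` mod `p`. -/
def UGL1 (p g : ℕ) [Fact p.Prime] : Set (Matrix (Fin g) (Fin g) ℤ_[p]) :=
  {M | M ∈ UGL0 p g ∧ ∀ i j : Fin g, i < j → (p : ℤ_[p]) ∣ M i j}

/-- `U^{opp}_{GL_g,1}`: lower triangular unipotent matrices in `GL_g(ℤ_p)`
congruent to `1` mod `p`. -/
def UGLopp1 (p g : ℕ) [Fact p.Prime] : Set (Matrix (Fin g) (Fin g) ℤ_[p]) :=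
  {M | (∀ i j : Fin g, i < j → M i j = 0) ∧ (∀ i : Fin g, M i i = 1) ∧
    ∀ i j : Fin g, j < i → (p : ℤ_[p]) ∣ M i j}

/-- `B_{GL_g,0}`: upper triangular matrices in `GL_g(ℤ_p)`. -/
def BGL0 (p g : ℕ) [Fact p.Prime] : Set (Matrix (Fin g) (Fin g) ℤ_[p]) :=
  {M | IsUnit M.det ∧ ∀ i j : Fin g, j < i → M i j = 0}

/-- The real number `p^{-w}`. -/
noncomputable def pw (q : ℕ) (w : ℚ) : ℝ := (q : ℝ) ^ (-(w : ℝ))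

/-- The `w`-neighbourhood `Iw^{(w)}_{GL_g}` of the Iwahori subgroup inside `GL_g(O_C)`. -/
def IwW (p g : ℕ) [Fact p.Prime] (C : Type*) [NormedField C]
    (ι : ℤ_[p] →+* C) (w : ℚ) : Set (Matrix (Fin g) (Fin g) C) :=
  {M | (∀ i j, ‖M i j‖ ≤ 1) ∧ ‖M.det‖ = 1 ∧
    ∃ M' ∈ IwGL p g, ∀ i j, ‖M i j - ι (M' i j)‖ ≤ pw p w}

/-- The `w`-neighbourhood `Iw^{+,(w)}_{GL_g}` of the strict Iwahori subgroup
inside `GL_g(O_C)`. -/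
def IwWplus (p g : ℕ) [Fact p.Prime] (C : Type*) [NormedField C]
    (ι : ℤ_[p] →+* C) (w : ℚ) : Set (Matrix (Fin g) (Fin g) C) :=
  {M | (∀ i j, ‖M i j‖ ≤ 1) ∧ ‖M.det‖ = 1 ∧
    ∃ M' ∈ IwGLplus p g, ∀ i j, ‖M i j - ι (M' i j)‖ ≤ pw p w}

/-- `T^{(w)}_{GL_g,0}`: diagonal matrices over `O_C` entrywise within `p^{-w}` of an
element of `T_{GL_g,0}`. -/
def TW (p g : ℕ) [Fact p.Prime] (C : Type*) [NormedField C]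
    (ι : ℤ_[p] →+* C) (w : ℚ) : Set (Matrix (Fin g) (Fin g) C) :=
  {M | (∀ i j : Fin g, i ≠ j → M i j = 0) ∧ (∀ i j, ‖M i j‖ ≤ 1) ∧
    ∃ M' ∈ TGL p g, ∀ i j, ‖M i j - ι (M' i j)‖ ≤ pw p w}

/-- `U^{(w)}_{GL_g,0}`: upper triangular unipotent matrices over `O_C` entrywise
within `p^{-w}` of an element of `U_{GL_g,0}`. -/
def UW0 (p g : ℕ) [Fact p.Prime] (C : Type*) [NormedField C]
    (ι : ℤ_[p] →+* C) (w : ℚ) : Set (Matrix (Fin g) (Fin g) C) :=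
  {M | (∀ i j : Fin g, j < i → M i j = 0) ∧ (∀ i : Fin g, M i i = 1) ∧
    (∀ i j, ‖M i j‖ ≤ 1) ∧
    ∃ M' ∈ UGL0 p g, ∀ i j, ‖M i j - ι (M' i j)‖ ≤ pw p w}

/-- `U^{(w)}_{GL_g,1}`: upper triangular unipotent matrices over `O_C` entrywise
within `p^{-w}` of an element of `U_{GL_g,1}`. -/
def UW1 (p g : ℕ) [Fact p.Prime] (C : Type*) [NormedField C]
    (ι : ℤ_[p] →+* C) (w : ℚ) : Set (Matrix (Fin g) (Fin g) C) :=
  {M | (∀ i j : Fin g, j < i → M i j = 0) ∧ (∀ i : Fin g, M i i = 1) ∧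
    (∀ i j, ‖M i j‖ ≤ 1) ∧
    ∃ M' ∈ UGL1 p g, ∀ i j, ‖M i j - ι (M' i j)‖ ≤ pw p w}

/-- `U^{opp,(w)}_{GL_g,1}`: lower triangular unipotent matrices over `O_C` entrywise
within `p^{-w}` of an element of `U^{opp}_{GL_g,1}`. -/
def UoppW1 (p g : ℕ) [Fact p.Prime] (C : Type*) [NormedField C]
    (ι : ℤ_[p] →+* C) (w : ℚ) : Set (Matrix (Fin g) (Fin g) C) :=
  {M | (∀ i j : Fin g, i < j → M i j = 0) ∧ (∀ i : Fin g, M i i = 1) ∧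
    (∀ i j, ‖M i j‖ ≤ 1) ∧
    ∃ M' ∈ UGLopp1 p g, ∀ i j, ‖M i j - ι (M' i j)‖ ≤ pw p w}

/-!
Over any commutative ring, Gaussian elimination factors a matrix with unit diagonal and lower
entries in an ideal `a` of the Jacobson radical as `L * T * U`: the Schur complements keep this
shape. The pairs `(x, y)` with `x ∈ C` within `p ^ (-w)` of `ι y`, `y ∈ ℤ_p`, form a ring in which
`(x, y)` is a unit as soon as `y` is. Factoring there a matrix together with its `p`-adic
approximation, and projecting to `C`, gives both equalities.
-/

section Pattern

variable {n R : Type*} [CommRing R]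

/-- The square matrices whose diagonal entries lie in `D`, whose entries below the diagonal lie in
`a` and whose entries above the diagonal lie in `b`. Iwahori, unipotent and diagonal matrices all
have this form. -/
def entryPattern [LT n] (D : Set R) (a b : Ideal R) : Set (Matrix n n R) :=
  {M | (∀ i, M i i ∈ D) ∧ (∀ i j, j < i → M i j ∈ a) ∧ ∀ i j, i < j → M i j ∈ b}

/-- The Iwahori-type matrices attached to two ideals. Units are required on the diagonal rather
than as determinant; when `a` lies in the Jacobson radical this is the same by
`isUnit_det_iff_forall_isUnit_diag`. -/
abbrev iwahori (n : Type*) [LT n] (a b : Ideal R) : Set (Matrix n n R) :=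
  entryPattern {x | IsUnit x} a b

/-- The invertible diagonal matrices. -/
abbrev diagonalTorus (n R : Type*) [LT n] [CommRing R] : Set (Matrix n n R) :=
  entryPattern {x | IsUnit x} ⊥ ⊥

/-- The upper triangular unipotent matrices congruent to the identity modulo `b`. -/
abbrev upperUnipotent (n : Type*) [LT n] (b : Ideal R) : Set (Matrix n n R) :=
  entryPattern {1} ⊥ b

/-- The lower triangular unipotent matrices congruent to the identity modulo `a`. -/
abbrev lowerUnipotent (n : Type*) [LT n] (a : Ideal R) : Set (Matrix n n R) :=
  entryPattern {1} a ⊥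

theorem entryPattern_mono [LT n] {D D' : Set R} {a a' b b' : Ideal R} (hD : D ⊆ D') (ha : a ≤ a')
    (hb : b ≤ b') : entryPattern (n := n) D a b ⊆ entryPattern D' a' b' :=
  fun _ hM ↦ ⟨fun i ↦ hD (hM.1 i), fun i j hij ↦ ha (hM.2.1 i j hij),
    fun i j hij ↦ hb (hM.2.2 i j hij)⟩

theorem isUnit_add_of_mem_of_le_jacobson {a : Ideal R} (ha : a ≤ Ideal.jacobson ⊥) {u x : R}
    (hu : IsUnit u) (hx : x ∈ a) : IsUnit (u + x) := by
  have := isLocalHom_of_le_jacobson_bot a ha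
  refine isUnit_of_map_unit (Ideal.Quotient.mk a) _ ?_
  rw [map_add, Ideal.Quotient.eq_zero_iff_mem.2 hx, add_zero]
  exact hu.map _

theorem isUnit_det_iff_forall_isUnit_diag [Fintype n] [DecidableEq n] [LinearOrder n]
    {a : Ideal R} (ha : a ≤ Ideal.jacobson ⊥) {M : Matrix n n R}
    (hM : ∀ i j, j < i → M i j ∈ a) : IsUnit M.det ↔ ∀ i, IsUnit (M i i) := by
  have := isLocalHom_of_le_jacobson_bot a ha
  have det_mod : Ideal.Quotient.mk a M.det = Ideal.Quotient.mk a (∏ i, M i i) := by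
    rw [RingHom.map_det, map_prod]
    exact det_of_isUpperTriangular fun i j hij ↦ Ideal.Quotient.eq_zero_iff_mem.2 (hM i j hij)
  rw [← isUnit_map_iff (Ideal.Quotient.mk a), det_mod, isUnit_map_iff, IsUnit.prod_univ_iff]

theorem mul_mem_iwahori [Fintype n] [LinearOrder n] {a b : Ideal R}
    (ha : a ≤ Ideal.jacobson ⊥) {M N : Matrix n n R} (hM : M ∈ iwahori n a b)
    (hN : N ∈ iwahori n a b) : M * N ∈ iwahori n a b := by
  refine ⟨fun i ↦ ?_, fun i j hij ↦ Ideal.sum_mem _ fun k _ ↦ ?_,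
    fun i j hij ↦ Ideal.sum_mem _ fun k _ ↦ ?_⟩
  · rw [Set.mem_ofPred_eq, mul_apply, Fintype.sum_eq_add_sum_compl i]
    refine isUnit_add_of_mem_of_le_jacobson ha ((hM.1 i).mul (hN.1 i))
      (Ideal.sum_mem _ fun k hk ↦ ?_)
    rcases lt_or_gt_of_ne (by simpa using hk) with hki | hik
    · exact a.mul_mem_right _ (hM.2.1 i k hki)
    · exact a.mul_mem_left _ (hN.2.1 k i hik)
  · rcases lt_or_ge j k with hjk | hkj
    · exact a.mul_mem_left _ (hN.2.1 k j hjk)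
    · exact a.mul_mem_right _ (hM.2.1 i k (hkj.trans_lt hij))
  · rcases lt_or_ge k j with hkj | hjk
    · exact b.mul_mem_left _ (hN.2.2 k j hkj)
    · exact b.mul_mem_right _ (hM.2.2 i k (hij.trans_le hjk))

end Pattern

section Bordered

variable {α R : Type*} [CommRing R] {m : ℕ}

/-- The block matrix with corner `d`, first row `r`, first column `c` and remaining block `A`. It
carries the induction on the size of a matrix. -/
def borderedMatrix (d : α) (r c : Fin m → α) (A : Matrix (Fin m) (Fin m) α) :
    Matrix (Fin (m + 1)) (Fin (m + 1)) α :=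
  of (vecCons (vecCons d r) fun i ↦ vecCons (c i) (A i))

theorem eq_borderedMatrix (M : Matrix (Fin (m + 1)) (Fin (m + 1)) α) :
    M = borderedMatrix (M 0 0) (fun j ↦ M 0 j.succ) (fun i ↦ M i.succ 0)
      (M.submatrix Fin.succ Fin.succ) := by
  ext i j
  cases i using Fin.cases <;> cases j using Fin.cases <;> rfl

theorem borderedMatrix_mem_entryPattern {D : Set R} {a b : Ideal R} {d : R} {r c : Fin m → R}
    {A : Matrix (Fin m) (Fin m) R} :
    borderedMatrix d r c A ∈ entryPattern D a b ↔
      d ∈ D ∧ (∀ j, r j ∈ b) ∧ (∀ i, c i ∈ a) ∧ A ∈ entryPattern D a b := by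
  simp only [borderedMatrix, entryPattern, Set.mem_ofPred_eq, Fin.forall_fin_succ, of_apply,
    cons_val_zero, cons_val_succ, lt_self_iff_false, Fin.succ_pos, Fin.not_lt_zero,
    Fin.succ_lt_succ_iff, IsEmpty.forall_iff, forall_const, true_and, forall_and]
  tauto

theorem borderedMatrix_mul (d d' : R) (r r' c c' : Fin m → R) (A A' : Matrix (Fin m) (Fin m) R) :
    borderedMatrix d r c A * borderedMatrix d' r' c' A' =
      borderedMatrix (d * d' + r ⬝ᵥ c') (d • r' + r ᵥ* A') (d' • c + A *ᵥ c')
        (vecMulVec c r' + A * A') := by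
  ext i j
  cases i using Fin.cases <;> cases j using Fin.cases <;>
    simp [borderedMatrix, mul_apply, Fin.sum_univ_succ, dotProduct, vecMul, mulVec, vecMulVec,
      mul_comm]

theorem borderedMatrix_eq_mul_of_schurComplement_eq_mul (u : Rˣ) (r c : Fin m → R)
    {A L T U : Matrix (Fin m) (Fin m) R} (h : A - vecMulVec ((↑u⁻¹ : R) • c) r = L * T * U) :
    borderedMatrix ↑u r c A =
      borderedMatrix 1 0 ((↑u⁻¹ : R) • c) L * borderedMatrix ↑u 0 0 T *
        borderedMatrix 1 ((↑u⁻¹ : R) • r) 0 U := by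
  simp [borderedMatrix_mul, ← h, smul_smul, vecMulVec_smul, smul_vecMulVec]

theorem schurComplement_mem_iwahori {a b : Ideal R} (ha : a ≤ Ideal.jacobson ⊥) (x : R)
    {r c : Fin m → R} {A : Matrix (Fin m) (Fin m) R} (hr : ∀ j, r j ∈ b) (hc : ∀ i, c i ∈ a)
    (hA : A ∈ iwahori (Fin m) a b) :
    A - vecMulVec (x • c) r ∈ iwahori (Fin m) a b := by
  have correction_mem_left (i j) : vecMulVec (x • c) r i j ∈ a :=
    a.mul_mem_right _ (a.mul_mem_left _ (hc i))
  have correction_mem_right (i j) : vecMulVec (x • c) r i j ∈ b := b.mul_mem_left _ (hr j)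
  refine ⟨fun i ↦ ?_, fun i j hij ↦ a.sub_mem (hA.2.1 i j hij) (correction_mem_left i j),
    fun i j hij ↦ b.sub_mem (hA.2.2 i j hij) (correction_mem_right i j)⟩
  rw [Set.mem_ofPred_eq, Matrix.sub_apply, sub_eq_add_neg]
  exact isUnit_add_of_mem_of_le_jacobson ha (hA.1 i) (a.neg_mem (correction_mem_left i i))

end Bordered

section Factorization

open scoped Pointwise

variable {R : Type*} [CommRing R] {a b : Ideal R}

theorem mem_mul_mul_iff {α : Type*} [Mul α] {s t u : Set α} {x : α} :
    x ∈ s * t * u ↔ ∃ y ∈ s, ∃ z ∈ t, ∃ v ∈ u, x = y * z * v := by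
  constructor
  · rintro ⟨_, ⟨y, hy, z, hz, rfl⟩, v, hv, rfl⟩
    exact ⟨y, hy, z, hz, v, hv, rfl⟩
  · rintro ⟨y, hy, z, hz, v, hv, rfl⟩
    exact Set.mul_mem_mul (Set.mul_mem_mul hy hz) hv

theorem iwahori_subset_mul (ha : a ≤ Ideal.jacobson ⊥) (m : ℕ) :
    iwahori (Fin m) a b ⊆
      lowerUnipotent (Fin m) a * diagonalTorus (Fin m) R * upperUnipotent (Fin m) b := by
  induction m with
  | zero =>
    exact fun M _ ↦ mem_mul_mul_iff.2 ⟨1, by simp [entryPattern], 1, by simp [entryPattern], 1,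
      by simp [entryPattern], Subsingleton.elim _ _⟩
  | succ m ih =>
    intro M hM
    rw [eq_borderedMatrix M] at hM ⊢
    obtain ⟨⟨u, hu⟩, hr, hc, hA⟩ := borderedMatrix_mem_entryPattern.1 hM
    obtain ⟨L, hL, T, hT, U, hU, hLTU⟩ :=
      mem_mul_mul_iff.1 (ih (schurComplement_mem_iwahori ha (↑u⁻¹ : R) hr hc hA))
    rw [← hu, borderedMatrix_eq_mul_of_schurComplement_eq_mul u _ _ hLTU]
    refine Set.mul_mem_mul (Set.mul_mem_mul ?_ ?_) ?_ <;> rw [borderedMatrix_mem_entryPattern]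
    · exact ⟨rfl, fun _ ↦ zero_mem _, fun i ↦ a.mul_mem_left _ (hc i), hL⟩
    · exact ⟨u.isUnit, fun _ ↦ zero_mem _, fun _ ↦ zero_mem _, hT⟩
    · exact ⟨rfl, fun j ↦ b.mul_mem_left _ (hr j), fun _ ↦ zero_mem _, hU⟩

theorem iwahori_eq_mul (ha : a ≤ Ideal.jacobson ⊥) (m : ℕ) :
    iwahori (Fin m) a b =
      lowerUnipotent (Fin m) a * diagonalTorus (Fin m) R * upperUnipotent (Fin m) b := by
  have one_subset_units : ({1} : Set R) ⊆ {x | IsUnit x} :=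
    Set.singleton_subset_iff.2 isUnit_one
  refine (iwahori_subset_mul ha m).antisymm ?_
  rintro _ ⟨_, ⟨L, hL, T, hT, rfl⟩, U, hU, rfl⟩
  exact mul_mem_iwahori ha
    (mul_mem_iwahori ha (entryPattern_mono one_subset_units le_rfl bot_le hL)
      (entryPattern_mono subset_rfl bot_le bot_le hT))
    (entryPattern_mono one_subset_units bot_le le_rfl hU)

end Factorization

section Neighborhood

open scoped Pointwise

variable {R C : Type*} [CommRing R] [NormedField C]

theorem norm_map_eq_one_of_isUnit {f : R →+* C} (hf : ∀ x, ‖f x‖ ≤ 1) {x : R} (hx : IsUnit x) :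
    ‖f x‖ = 1 := by
  obtain ⟨y, hxy⟩ := hx.exists_right_inv
  refine (hf x).antisymm ?_
  calc 1 = ‖f x‖ * ‖f y‖ := by rw [← norm_mul, ← map_mul, hxy, map_one, norm_one]
    _ ≤ ‖f x‖ := mul_le_of_le_one_right (norm_nonneg _) (hf y)

/-- The matrices over `C` lying entrywise within `q` of the image under `ι` of a matrix in `X`. -/
def matrixNhd {n : Type*} (ι : R →+* C) (q : ℝ) (X : Set (Matrix n n R)) : Set (Matrix n n C) :=
  {M | ∃ M' ∈ X, ∀ i j, ‖M i j - ι (M' i j)‖ ≤ q}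

variable [IsUltrametricDist C] {ι : R →+* C} {q : ℝ}

theorem norm_le_one_of_norm_sub_le (hι : ∀ x, ‖ι x‖ ≤ 1) (hq1 : q ≤ 1) {x : C} {y : R}
    (h : ‖x - ι y‖ ≤ q) : ‖x‖ ≤ 1 := by
  rw [← sub_add_cancel x (ι y)]
  exact (IsUltrametricDist.norm_add_le_max _ _).trans (max_le (h.trans hq1) (hι y))

/-- The ring of pairs `(x, y)` with `x` within `q` of `ι y`. A matrix over it is a matrix over `C`
together with an approximation by a matrix over `R`. -/
def nearPairs (hι : ∀ x, ‖ι x‖ ≤ 1) (hq0 : 0 ≤ q) (hq1 : q ≤ 1) : Subring (C × R) where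
  carrier := {z | ‖z.1 - ι z.2‖ ≤ q}
  zero_mem' := by simpa using hq0
  one_mem' := by simpa using hq0
  neg_mem' {z} hz := by
    rwa [Set.mem_ofPred_eq, Prod.fst_neg, Prod.snd_neg, map_neg, neg_sub_neg, norm_sub_rev]
  add_mem' {z z'} hz hz' := by
    rw [Set.mem_ofPred_eq, Prod.fst_add, Prod.snd_add, map_add, add_sub_add_comm]
    exact (IsUltrametricDist.norm_add_le_max _ _).trans (max_le hz hz')
  mul_mem' {z z'} hz hz' := by
    have split : (z * z').1 - ι (z * z').2 =
        z.1 * (z'.1 - ι z'.2) + (z.1 - ι z.2) * ι z'.2 := by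
      rw [Prod.fst_mul, Prod.snd_mul, map_mul]
      ring
    rw [Set.mem_ofPred_eq, split]
    refine (IsUltrametricDist.norm_add_le_max _ _).trans (max_le ?_ ?_) <;> rw [norm_mul]
    · have norm_fst_le_one : ‖z.1‖ ≤ 1 := norm_le_one_of_norm_sub_le hι hq1 hz
      exact (mul_le_of_le_one_left (norm_nonneg _) norm_fst_le_one).trans hz'
    · exact (mul_le_of_le_one_right (norm_nonneg _) (hι _)).trans hz

namespace nearPairs

section

variable (hι : ∀ x, ‖ι x‖ ≤ 1) (hq0 : 0 ≤ q) (hq1 : q ≤ 1)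

/-- The projection of a pair to the element of `C` being approximated. -/
def fst : nearPairs hι hq0 hq1 →+* C :=
  (RingHom.fst C R).comp (nearPairs hι hq0 hq1).subtype

/-- The projection of a pair to its approximation in `R`. -/
def snd : nearPairs hι hq0 hq1 →+* R :=
  (RingHom.snd C R).comp (nearPairs hι hq0 hq1).subtype

variable {hι hq0 hq1}

theorem norm_fst_le_one (z : nearPairs hι hq0 hq1) : ‖fst hι hq0 hq1 z‖ ≤ 1 :=
  norm_le_one_of_norm_sub_le hι hq1 z.2

theorem image_entryPattern {n : Type*} [Fintype n] [DecidableEq n] [LT n]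
    (D : Set C) (D' : Set R) (a b : Ideal C) (a' b' : Ideal R) :
    (fst hι hq0 hq1).mapMatrix '' entryPattern (n := n)
        (fst hι hq0 hq1 ⁻¹' D ∩ snd hι hq0 hq1 ⁻¹' D')
        (a.comap (fst hι hq0 hq1) ⊓ a'.comap (snd hι hq0 hq1))
        (b.comap (fst hι hq0 hq1) ⊓ b'.comap (snd hι hq0 hq1)) =
      entryPattern D a b ∩ matrixNhd ι q (entryPattern D' a' b') := by
  ext M
  constructor
  · rintro ⟨N, hN, rfl⟩
    exact ⟨⟨fun i ↦ (hN.1 i).1, fun i j hij ↦ (hN.2.1 i j hij).1,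
      fun i j hij ↦ (hN.2.2 i j hij).1⟩, N.map (snd hι hq0 hq1), ⟨fun i ↦ (hN.1 i).2,
      fun i j hij ↦ (hN.2.1 i j hij).2, fun i j hij ↦ (hN.2.2 i j hij).2⟩, fun i j ↦ (N i j).2⟩
  · rintro ⟨hM, M', hM', hMM'⟩
    exact ⟨of fun i j ↦ ⟨(M i j, M' i j), hMM' i j⟩, ⟨fun i ↦ ⟨hM.1 i, hM'.1 i⟩,
      fun i j hij ↦ ⟨hM.2.1 i j hij, hM'.2.1 i j hij⟩,
      fun i j hij ↦ ⟨hM.2.2 i j hij, hM'.2.2 i j hij⟩⟩, rfl⟩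

theorem comap_bot_inf_comap_bot :
    (⊥ : Ideal C).comap (fst hι hq0 hq1) ⊓ (⊥ : Ideal R).comap (snd hι hq0 hq1) = ⊥ :=
  le_bot_iff.1 fun _ hz ↦ Subtype.ext (Prod.ext hz.1 hz.2)

theorem preimage_one_inter_preimage_one :
    fst hι hq0 hq1 ⁻¹' {1} ∩ snd hι hq0 hq1 ⁻¹' {1} = {1} :=
  Set.ext fun _ ↦ ⟨fun hz ↦ Subtype.ext (Prod.ext hz.1 hz.2), by rintro rfl; simp⟩

theorem image_lowerUnipotent {n : Type*} [Fintype n] [DecidableEq n] [LT n] (a : Ideal R) :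
    (fst hι hq0 hq1).mapMatrix '' lowerUnipotent n (a.comap (snd hι hq0 hq1)) =
      lowerUnipotent n ⊤ ∩ matrixNhd ι q (lowerUnipotent n a) := by
  rw [← image_entryPattern (hι := hι) (hq0 := hq0) (hq1 := hq1), preimage_one_inter_preimage_one,
    comap_bot_inf_comap_bot, Ideal.comap_top, top_inf_eq]

theorem image_upperUnipotent {n : Type*} [Fintype n] [DecidableEq n] [LT n] (b : Ideal R) :
    (fst hι hq0 hq1).mapMatrix '' upperUnipotent n (b.comap (snd hι hq0 hq1)) =
      upperUnipotent n ⊤ ∩ matrixNhd ι q (upperUnipotent n b) := by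
  rw [← image_entryPattern (hι := hι) (hq0 := hq0) (hq1 := hq1), preimage_one_inter_preimage_one,
    comap_bot_inf_comap_bot, Ideal.comap_top, top_inf_eq]

end

section

variable {hι : ∀ x, ‖ι x‖ ≤ 1} {hq0 : 0 ≤ q} (hq1 : q < 1)

theorem isLocalHom_snd : IsLocalHom (snd hι hq0 hq1.le) where
  map_nonunit z hz := by
    obtain ⟨⟨x, y⟩, near⟩ := z
    change ‖x - ι y‖ ≤ q at near
    change IsUnit y at hz
    obtain ⟨y', hyy'⟩ := hz.exists_right_inv
    have norm_y : ‖ι y‖ = 1 := norm_map_eq_one_of_isUnit hι hz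
    have norm_x : ‖x‖ = 1 := by
      have : ‖x + -ι y‖ < max ‖x‖ ‖-ι y‖ := by
        rw [← sub_eq_add_neg, norm_neg, norm_y]
        exact (near.trans_lt hq1).trans_le (le_max_right _ _)
      rw [IsUltrametricDist.norm_eq_of_add_norm_lt_max this, norm_neg, norm_y]
    have x_ne_zero : x ≠ 0 := norm_ne_zero_iff.1 (norm_x ▸ one_ne_zero)
    have map_mul_map : ι y * ι y' = 1 := by rw [← map_mul, hyy', map_one]
    have inv_near : ‖x⁻¹ - ι y'‖ ≤ q := by
      have inv_sub : x⁻¹ - ι y' = -(x⁻¹ * (x - ι y) * ι y') := by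
        field_simp
        linear_combination -map_mul_map
      rw [inv_sub, norm_neg, norm_mul, norm_mul, norm_inv, norm_x, inv_one, one_mul]
      exact (mul_le_of_le_one_right (norm_nonneg _) (hι y')).trans near
    exact .of_mul_eq_one ⟨(x⁻¹, y'), inv_near⟩
      (Subtype.ext (Prod.ext (mul_inv_cancel₀ x_ne_zero) hyy'))

theorem preimage_univ_inter_preimage_isUnit :
    fst hι hq0 hq1.le ⁻¹' Set.univ ∩ snd hι hq0 hq1.le ⁻¹' {y | IsUnit y} = {z | IsUnit z} := by
  have := isLocalHom_snd (hι := hι) (hq0 := hq0) hq1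
  ext z
  simp

theorem image_iwahori {n : Type*} [Fintype n] [DecidableEq n] [LT n] (a b : Ideal R) :
    (fst hι hq0 hq1.le).mapMatrix ''
        iwahori n (a.comap (snd hι hq0 hq1.le)) (b.comap (snd hι hq0 hq1.le)) =
      matrixNhd ι q (iwahori n a b) := by
  have entryPattern_univ_top_top : entryPattern (n := n) (.univ : Set C) ⊤ ⊤ = .univ :=
    Set.eq_univ_of_forall fun _ ↦ by simp [entryPattern]
  rw [← Set.univ_inter (matrixNhd _ _ _), ← entryPattern_univ_top_top,
    ← image_entryPattern (hι := hι) (hq0 := hq0) (hq1 := hq1.le),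
    preimage_univ_inter_preimage_isUnit hq1]
  simp only [Ideal.comap_top, top_inf_eq]

theorem image_diagonalTorus {n : Type*} [Fintype n] [DecidableEq n] [LT n] :
    (fst hι hq0 hq1.le).mapMatrix '' diagonalTorus n (nearPairs hι hq0 hq1.le) =
      entryPattern .univ ⊥ ⊥ ∩ matrixNhd ι q (diagonalTorus n R) := by
  rw [← image_entryPattern (hι := hι) (hq0 := hq0) (hq1 := hq1.le),
    preimage_univ_inter_preimage_isUnit hq1, comap_bot_inf_comap_bot]

end

end nearPairs

theorem comap_le_jacobson_bot {S : Type*} [CommRing S] (f : S →+* R) [IsLocalHom f]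
    {a : Ideal R} (ha : a ≤ Ideal.jacobson ⊥) : a.comap f ≤ Ideal.jacobson ⊥ := by
  refine fun x hx ↦ Ideal.mem_jacobson_bot.2 fun y ↦ isUnit_of_map_unit f _ ?_
  rw [map_add, map_mul, map_one]
  exact Ideal.mem_jacobson_bot.1 (ha hx) (f y)

theorem norm_apply_le_one_of_mem_matrixNhd {n : Type*} (hι : ∀ x, ‖ι x‖ ≤ 1) (hq1 : q ≤ 1)
    {X : Set (Matrix n n R)} {M : Matrix n n C} (hM : M ∈ matrixNhd ι q X) (i j : n) :
    ‖M i j‖ ≤ 1 := by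
  obtain ⟨M', -, hMM'⟩ := hM
  exact norm_le_one_of_norm_sub_le hι hq1 (hMM' i j)

theorem norm_det_eq_one_of_mem_matrixNhd_iwahori {n : Type*} [Fintype n] [DecidableEq n]
    [LinearOrder n] (hι : ∀ x, ‖ι x‖ ≤ 1) (hq0 : 0 ≤ q) (hq1 : q < 1) {a b : Ideal R}
    (ha : a ≤ Ideal.jacobson ⊥) {M : Matrix n n C} (hM : M ∈ matrixNhd ι q (iwahori n a b)) :
    ‖M.det‖ = 1 := by
  have := nearPairs.isLocalHom_snd (hι := hι) (hq0 := hq0) hq1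
  rw [← nearPairs.image_iwahori (hι := hι) (hq0 := hq0) hq1] at hM
  obtain ⟨N, hN, rfl⟩ := hM
  rw [← RingHom.map_det]
  exact norm_map_eq_one_of_isUnit nearPairs.norm_fst_le_one
    ((isUnit_det_iff_forall_isUnit_diag (comap_le_jacobson_bot _ ha) hN.2.1).2 hN.1)

theorem matrixNhd_iwahori_eq_mul (hι : ∀ x, ‖ι x‖ ≤ 1) (hq0 : 0 ≤ q) (hq1 : q < 1)
    {a b : Ideal R} (ha : a ≤ Ideal.jacobson ⊥) (m : ℕ) :
    matrixNhd ι q (iwahori (Fin m) a b) =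
      (lowerUnipotent (Fin m) ⊤ ∩ matrixNhd ι q (lowerUnipotent (Fin m) a)) *
        (entryPattern .univ ⊥ ⊥ ∩ matrixNhd ι q (diagonalTorus (Fin m) R)) *
        (upperUnipotent (Fin m) ⊤ ∩ matrixNhd ι q (upperUnipotent (Fin m) b)) := by
  have := nearPairs.isLocalHom_snd (hι := hι) (hq0 := hq0) hq1
  rw [← nearPairs.image_iwahori (hι := hι) (hq0 := hq0) hq1,
    iwahori_eq_mul (comap_le_jacobson_bot _ ha), Set.image_mul, Set.image_mul,
    nearPairs.image_lowerUnipotent, nearPairs.image_diagonalTorus hq1,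
    nearPairs.image_upperUnipotent]

end Neighborhood

section Padic

open scoped Pointwise

theorem pw_nonneg (p : ℕ) (w : ℚ) : 0 ≤ pw p w :=
  Real.rpow_nonneg p.cast_nonneg _

variable {p g : ℕ} [Fact p.Prime]

theorem pw_lt_one {w : ℚ} (hw : 0 < w) : pw p w < 1 :=
  Real.rpow_lt_one_of_one_lt_of_neg (mod_cast (Fact.out : p.Prime).one_lt)
    (neg_lt_zero.2 (mod_cast hw))

theorem span_p_le_jacobson_bot : Ideal.span {(p : ℤ_[p])} ≤ Ideal.jacobson ⊥ := by
  rw [← PadicInt.maximalIdeal_eq_span_p, IsLocalRing.jacobson_eq_maximalIdeal ⊥ bot_ne_top]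

theorem forall_ne_iff_forall_lt_and_forall_lt {n : Type*} [LinearOrder n] {P : n → n → Prop} :
    (∀ i j, i ≠ j → P i j) ↔ (∀ i j, j < i → P i j) ∧ ∀ i j, i < j → P i j := by
  simp only [ne_iff_lt_or_gt, or_imp, forall_and, and_comm]

theorem IwGL_eq_iwahori : IwGL p g = iwahori (Fin g) (Ideal.span {(p : ℤ_[p])}) ⊤ := by
  ext M
  simp only [IwGL, entryPattern, Set.mem_ofPred_eq, ← Ideal.mem_span_singleton, Submodule.mem_top,
    implies_true, and_true]
  exact and_congr_left (isUnit_det_iff_forall_isUnit_diag span_p_le_jacobson_bot)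

theorem IwGLplus_eq_iwahori :
    IwGLplus p g = iwahori (Fin g) (Ideal.span {(p : ℤ_[p])}) (Ideal.span {(p : ℤ_[p])}) := by
  ext M
  simp only [IwGLplus, entryPattern, Set.mem_ofPred_eq, ← Ideal.mem_span_singleton,
    forall_ne_iff_forall_lt_and_forall_lt]
  exact and_congr_left fun h ↦ isUnit_det_iff_forall_isUnit_diag span_p_le_jacobson_bot h.1

theorem TGL_eq_diagonalTorus : TGL p g = diagonalTorus (Fin g) ℤ_[p] := by
  ext M
  simp only [TGL, entryPattern, Set.mem_ofPred_eq, Ideal.mem_bot,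
    forall_ne_iff_forall_lt_and_forall_lt]
  exact and_congr_left fun h ↦ isUnit_det_iff_forall_isUnit_diag bot_le h.1

theorem UGL0_eq_upperUnipotent : UGL0 p g = upperUnipotent (Fin g) ⊤ := by
  ext M
  simp only [UGL0, entryPattern, Set.mem_ofPred_eq, Set.mem_singleton_iff, Ideal.mem_bot,
    Submodule.mem_top, implies_true, and_true]
  exact and_comm

theorem UGL1_eq_upperUnipotent :
    UGL1 p g = upperUnipotent (Fin g) (Ideal.span {(p : ℤ_[p])}) := by
  ext M
  simp only [UGL1, UGL0, entryPattern, Set.mem_ofPred_eq, Set.mem_singleton_iff, Ideal.mem_bot,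
    Ideal.mem_span_singleton]
  tauto

theorem UGLopp1_eq_lowerUnipotent :
    UGLopp1 p g = lowerUnipotent (Fin g) (Ideal.span {(p : ℤ_[p])}) := by
  ext M
  simp only [UGLopp1, entryPattern, Set.mem_ofPred_eq, Set.mem_singleton_iff, Ideal.mem_bot,
    Ideal.mem_span_singleton]
  tauto

variable {C : Type*} [NormedField C] [IsUltrametricDist C] {ι : ℤ_[p] →+* C} {w : ℚ}

theorem IwW_eq_matrixNhd (hι : ∀ x, ‖ι x‖ ≤ 1) (hw : 0 < w) :
    IwW p g C ι w =
      matrixNhd ι (pw p w) (iwahori (Fin g) (Ideal.span {(p : ℤ_[p])}) ⊤) := by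
  rw [IwW, IwGL_eq_iwahori]
  exact Set.ext fun M ↦ ⟨fun hM ↦ hM.2.2, fun hM ↦
    ⟨norm_apply_le_one_of_mem_matrixNhd hι (pw_lt_one hw).le hM,
      norm_det_eq_one_of_mem_matrixNhd_iwahori hι (pw_nonneg p w) (pw_lt_one hw)
        span_p_le_jacobson_bot hM, hM⟩⟩

theorem IwWplus_eq_matrixNhd (hι : ∀ x, ‖ι x‖ ≤ 1) (hw : 0 < w) :
    IwWplus p g C ι w = matrixNhd ι (pw p w)
      (iwahori (Fin g) (Ideal.span {(p : ℤ_[p])}) (Ideal.span {(p : ℤ_[p])})) := by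
  rw [IwWplus, IwGLplus_eq_iwahori]
  exact Set.ext fun M ↦ ⟨fun hM ↦ hM.2.2, fun hM ↦
    ⟨norm_apply_le_one_of_mem_matrixNhd hι (pw_lt_one hw).le hM,
      norm_det_eq_one_of_mem_matrixNhd_iwahori hι (pw_nonneg p w) (pw_lt_one hw)
        span_p_le_jacobson_bot hM, hM⟩⟩

theorem TW_eq_inter_matrixNhd (hι : ∀ x, ‖ι x‖ ≤ 1) (hw : 0 < w) :
    TW p g C ι w =
      entryPattern .univ ⊥ ⊥ ∩ matrixNhd ι (pw p w) (diagonalTorus (Fin g) ℤ_[p]) := by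
  rw [TW, TGL_eq_diagonalTorus]
  simp only [forall_ne_iff_forall_lt_and_forall_lt]
  exact Set.ext fun M ↦ ⟨fun ⟨hM, _, hnear⟩ ↦ ⟨⟨fun _ ↦ trivial, hM⟩, hnear⟩, fun hM ↦
    ⟨hM.1.2, norm_apply_le_one_of_mem_matrixNhd hι (pw_lt_one hw).le hM.2, hM.2⟩⟩

theorem UW0_eq_inter_matrixNhd (hι : ∀ x, ‖ι x‖ ≤ 1) (hw : 0 < w) :
    UW0 p g C ι w =
      upperUnipotent (Fin g) ⊤ ∩ matrixNhd ι (pw p w) (upperUnipotent (Fin g) ⊤) := by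
  rw [UW0, UGL0_eq_upperUnipotent]
  exact Set.ext fun M ↦ ⟨fun ⟨hlower, hdiag, _, hnear⟩ ↦ ⟨⟨hdiag, hlower, fun _ _ _ ↦ trivial⟩,
    hnear⟩, fun hM ↦ ⟨hM.1.2.1, hM.1.1,
      norm_apply_le_one_of_mem_matrixNhd hι (pw_lt_one hw).le hM.2, hM.2⟩⟩

theorem UW1_eq_inter_matrixNhd (hι : ∀ x, ‖ι x‖ ≤ 1) (hw : 0 < w) :
    UW1 p g C ι w = upperUnipotent (Fin g) ⊤ ∩
      matrixNhd ι (pw p w) (upperUnipotent (Fin g) (Ideal.span {(p : ℤ_[p])})) := by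
  rw [UW1, UGL1_eq_upperUnipotent]
  exact Set.ext fun M ↦ ⟨fun ⟨hlower, hdiag, _, hnear⟩ ↦ ⟨⟨hdiag, hlower, fun _ _ _ ↦ trivial⟩,
    hnear⟩, fun hM ↦ ⟨hM.1.2.1, hM.1.1,
      norm_apply_le_one_of_mem_matrixNhd hι (pw_lt_one hw).le hM.2, hM.2⟩⟩

theorem UoppW1_eq_inter_matrixNhd (hι : ∀ x, ‖ι x‖ ≤ 1) (hw : 0 < w) :
    UoppW1 p g C ι w = lowerUnipotent (Fin g) ⊤ ∩
      matrixNhd ι (pw p w) (lowerUnipotent (Fin g) (Ideal.span {(p : ℤ_[p])})) := by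
  rw [UoppW1, UGLopp1_eq_lowerUnipotent]
  exact Set.ext fun M ↦ ⟨fun ⟨hupper, hdiag, _, hnear⟩ ↦ ⟨⟨hdiag, fun _ _ _ ↦ trivial, hupper⟩,
    hnear⟩, fun hM ↦ ⟨hM.1.2.2, hM.1.1,
      norm_apply_le_one_of_mem_matrixNhd hι (pw_lt_one hw).le hM.2, hM.2⟩⟩

theorem statement3_general (p g : ℕ) [Fact p.Prime] (C : Type*) [NormedField C]
    [IsUltrametricDist C] (ι : ℤ_[p] →+* C) (hι : ∀ x : ℤ_[p], ‖ι x‖ ≤ 1) (w : ℚ) (hw : 0 < w) :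
    IwW p g C ι w = UoppW1 p g C ι w * TW p g C ι w * UW0 p g C ι w ∧
      IwWplus p g C ι w = UoppW1 p g C ι w * TW p g C ι w * UW1 p g C ι w := by
  rw [IwW_eq_matrixNhd hι hw, IwWplus_eq_matrixNhd hι hw, UoppW1_eq_inter_matrixNhd hι hw,
    TW_eq_inter_matrixNhd hι hw, UW0_eq_inter_matrixNhd hι hw, UW1_eq_inter_matrixNhd hι hw]
  exact ⟨matrixNhd_iwahori_eq_mul hι (pw_nonneg p w) (pw_lt_one hw) span_p_le_jacobson_bot g,
    matrixNhd_iwahori_eq_mul hι (pw_nonneg p w) (pw_lt_one hw) span_p_le_jacobson_bot g⟩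

end Padic

theorem statement3 (p g : ℕ) [Fact p.Prime] (hg : 1 ≤ g) (C : Type*)
    [NormedField C] [CompleteSpace C] [IsUltrametricDist C] (ι : ℤ_[p] →+* C)
    (hι : ∀ x : ℤ_[p], ‖ι x‖ = ‖x‖) (w : ℚ) (hw : 0 < w) :
    (∀ M : Matrix (Fin g) (Fin g) C,
      M ∈ IwW p g C ι w ↔
        ∃ ν ∈ UoppW1 p g C ι w, ∃ τ ∈ TW p g C ι w, ∃ ν' ∈ UW0 p g C ι w,
          M = ν * τ * ν') ∧
    ∀ M : Matrix (Fin g) (Fin g) C,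
      M ∈ IwWplus p g C ι w ↔
        ∃ ν ∈ UoppW1 p g C ι w, ∃ τ ∈ TW p g C ι w, ∃ ν' ∈ UW1 p g C ι w,
          M = ν * τ * ν' := by
  simpa only [Set.ext_iff, mem_mul_mul_iff] using
    statement3_general p g C ι (fun x ↦ (hι x).trans_le x.norm_le_one) w hw
end

section
/- Let w ∈ ℚ_{>0} and let z ∈ M_g(O_C) be such that there exists z₀ ∈ M_g(ℤ_p) with |z_{ij} − (z₀)_{ij}| ≤ p^{−w} for all i, j. Then for every γ ∈ Iw_{GSp_{2g}}: (i) the matrix γ_a + zγ_c is invertible in M_g(O_C); (ii) the matrix z·γ := (γ_a + zγ_c)^{−1}(γ_b + zγ_d) has entries in O_C and there exists z₀' ∈ M_g(ℤ_p) with |(z·γ)_{ij} − (z₀')_{ij}| ≤ p^{−w} for all i, j; (iii) for all γ, γ' ∈ Iw_{GSp_{2g}} one has (z·γ)·γ' = z·(γγ'), so these formulas define a right action of Iw_{GSp_{2g}} on the set of such matrices z. -/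
open Matrix

/-- The Iwahori subgroup `Iw_{GSp_{2g}}` of `GSp_{2g}(ℤ_p)`: reduction mod `p`
is upper triangular. -/
def IwGSp (p g : ℕ) [Fact p.Prime] :
    Set (Matrix (Fin g ⊕ Fin g) (Fin g ⊕ Fin g) ℤ_[p]) :=
  {M | IsGSp M ∧ ∀ a b : Fin g ⊕ Fin g, idx b < idx a → (p : ℤ_[p]) ∣ M a b}

/-- The action `z · γ = (γ_a + zγ_c)⁻¹ (γ_b + zγ_d)` of a `2g × 2g` matrix over `ℤ_p`
on a `g × g` coordinate matrix over `C`. -/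
noncomputable def zAct (p g : ℕ) [Fact p.Prime] (C : Type*) [NormedField C]
    (ι : ℤ_[p] →+* C) (z : Matrix (Fin g) (Fin g) C)
    (γ : Matrix (Fin g ⊕ Fin g) (Fin g ⊕ Fin g) ℤ_[p]) :
    Matrix (Fin g) (Fin g) C :=
  ((γ.toBlocks₁₁.map fun x => ι x) + z * (γ.toBlocks₂₁.map fun x => ι x))⁻¹ *
    ((γ.toBlocks₁₂.map fun x => ι x) + z * (γ.toBlocks₂₂.map fun x => ι x))

/-!
The row `(1, z)` satisfies `(1, z) * γ = j * (1, z · γ)` with `j = γ_a + z γ_c`, whenever `j` is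
invertible. Associativity of matrix multiplication turns this into the cocycle relation for `j` and
the right action law, and since inverses are preserved by ring homomorphisms, so is `z ↦ z · γ`.

Let `O` be the unit ball of `C`. Modulo the maximal ideal of `O` the matrix `γ` is block upper
triangular, so `γ_a` is invertible there and `j ≡ γ_a`; as units lift from the residue field, `j` is
invertible over `O`. Finally `‖x‖ ≤ p ^ (-w)` cuts out an ideal `K` of `O`, and reduction modulo `K`
shows that `z ≡ z₀` implies `z · γ ≡ z₀ · γ`, where `z₀ · γ` already has entries in `ℤ_p`.
-/

open scoped NNReal

section Moebius

variable {m n R S : Type*} [Fintype n] [CommRing R] [CommRing S]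

/-- The automorphy factor `γ_a + z γ_c`, the denominator of the fractional linear action
`z ↦ (γ_a + z γ_c)⁻¹ (γ_b + z γ_d)` of block matrices on `m × n` matrices. -/
def moebiusDenom (z : Matrix m n R) (γ : Matrix (m ⊕ n) (m ⊕ n) R) : Matrix m m R :=
  γ.toBlocks₁₁ + z * γ.toBlocks₂₁

/-- The numerator `γ_b + z γ_d` of the fractional linear action of block matrices on `m × n`
matrices. -/
def moebiusNum (z : Matrix m n R) (γ : Matrix (m ⊕ n) (m ⊕ n) R) : Matrix m n R :=
  γ.toBlocks₁₂ + z * γ.toBlocks₂₂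

theorem map_moebiusDenom (f : R →+* S) (z : Matrix m n R) (γ : Matrix (m ⊕ n) (m ⊕ n) R) :
    (moebiusDenom z γ).map f = moebiusDenom (z.map f) (γ.map f) := by
  rw [moebiusDenom, Matrix.map_add f (map_add f), Matrix.map_mul]
  rfl

theorem map_moebiusNum (f : R →+* S) (z : Matrix m n R) (γ : Matrix (m ⊕ n) (m ⊕ n) R) :
    (moebiusNum z γ).map f = moebiusNum (z.map f) (γ.map f) := by
  rw [moebiusNum, Matrix.map_add f (map_add f), Matrix.map_mul]
  rfl

variable [Fintype m] [DecidableEq m]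

theorem det_moebiusDenom_map (f : R →+* S) (z : Matrix m n R) (γ : Matrix (m ⊕ n) (m ⊕ n) R) :
    (moebiusDenom (z.map f) (γ.map f)).det = f (moebiusDenom z γ).det := by
  rw [← map_moebiusDenom, f.map_det, RingHom.mapMatrix_apply]

/-- The fractional linear transformation `z · γ = (γ_a + z γ_c)⁻¹ (γ_b + z γ_d)` of `m × n`
matrices. It is meaningful only if `moebiusDenom z γ` is invertible, since the inverse of a
singular matrix is `0` by convention. -/
noncomputable def moebius (z : Matrix m n R) (γ : Matrix (m ⊕ n) (m ⊕ n) R) : Matrix m n R :=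
  (moebiusDenom z γ)⁻¹ * moebiusNum z γ

variable {z : Matrix m n R} {γ : Matrix (m ⊕ n) (m ⊕ n) R}

theorem moebiusDenom_mul_moebius (hdet : IsUnit (moebiusDenom z γ).det) :
    moebiusDenom z γ * moebius z γ = moebiusNum z γ :=
  mul_nonsing_inv_cancel_left _ _ hdet

theorem eq_moebius_of_moebiusDenom_mul_eq (hdet : IsUnit (moebiusDenom z γ).det)
    {x : Matrix m n R} (hx : moebiusDenom z γ * x = moebiusNum z γ) : x = moebius z γ := by
  rw [moebius, ← hx, nonsing_inv_mul_cancel_left _ _ hdet]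

theorem map_moebius (f : R →+* S) (hdet : IsUnit (moebiusDenom z γ).det) :
    (moebius z γ).map f = moebius (z.map f) (γ.map f) := by
  refine eq_moebius_of_moebiusDenom_mul_eq (det_moebiusDenom_map f z γ ▸ hdet.map f) ?_
  rw [← map_moebiusDenom, ← Matrix.map_mul, moebiusDenom_mul_moebius hdet, map_moebiusNum]

theorem fromCols_one_mul (z : Matrix m n R) (γ : Matrix (m ⊕ n) (m ⊕ n) R) :
    fromCols (1 : Matrix m m R) z * γ = fromCols (moebiusDenom z γ) (moebiusNum z γ) := by
  conv_lhs => rw [← fromBlocks_toBlocks γ, fromCols_mul_fromBlocks, Matrix.one_mul,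
    Matrix.one_mul]
  rfl

theorem fromCols_one_mul_eq_moebiusDenom_mul (hdet : IsUnit (moebiusDenom z γ).det) :
    fromCols (1 : Matrix m m R) z * γ = moebiusDenom z γ * fromCols 1 (moebius z γ) := by
  rw [mul_fromCols, mul_one, moebiusDenom_mul_moebius hdet, fromCols_one_mul]

theorem moebius_moebius (hdet : IsUnit (moebiusDenom z γ).det) (γ' : Matrix (m ⊕ n) (m ⊕ n) R) :
    moebius (moebius z γ) γ' = moebius z (γ * γ') := by
  have hrow : fromCols (moebiusDenom z (γ * γ')) (moebiusNum z (γ * γ')) =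
      fromCols (moebiusDenom z γ * moebiusDenom (moebius z γ) γ')
        (moebiusDenom z γ * moebiusNum (moebius z γ) γ') := by
    rw [← fromCols_one_mul, ← Matrix.mul_assoc,
      fromCols_one_mul_eq_moebiusDenom_mul hdet, Matrix.mul_assoc,
      fromCols_one_mul, mul_fromCols]
  obtain ⟨hdenom, hnum⟩ := fromCols_inj hrow
  calc moebius (moebius z γ) γ'
      = (moebiusDenom z γ * moebiusDenom (moebius z γ) γ')⁻¹ *
          (moebiusDenom z γ * moebiusNum (moebius z γ) γ') := by
        rw [Matrix.mul_inv_rev, Matrix.mul_assoc, nonsing_inv_mul_cancel_left _ _ hdet]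
        rfl
    _ = moebius z (γ * γ') := by rw [← hdenom, ← hnum, moebius]

theorem moebius_sub_moebius_mem {z' : Matrix m n R} {K : Ideal R}
    (hdet : IsUnit (moebiusDenom z γ).det) (hdet' : IsUnit (moebiusDenom z' γ).det)
    (hz : ∀ i j, z i j - z' i j ∈ K) (i : m) (j : n) :
    moebius z γ i j - moebius z' γ i j ∈ K := by
  have hmap : z.map (Ideal.Quotient.mk K) = z'.map (Ideal.Quotient.mk K) :=
    Matrix.ext fun i j => Ideal.Quotient.eq.2 (hz i j)
  have hmoebius := map_moebius (Ideal.Quotient.mk K) hdet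
  rw [hmap, ← map_moebius _ hdet'] at hmoebius
  exact Ideal.Quotient.eq.1 (congr_fun₂ hmoebius i j)

end Moebius

section Parahoric

variable {m n R S : Type*} [Fintype m] [Fintype n] [DecidableEq m] [DecidableEq n] [CommRing R]
  [CommRing S]

variable (m n) in
/-- The parahoric subgroup of type `(m, n)` and level `I`: the invertible block matrices over `R`
whose reduction modulo `I` lies in the block upper triangular parabolic subgroup. -/
def parahoric (I : Ideal R) : Set (Matrix (m ⊕ n) (m ⊕ n) R) :=
  {γ | IsUnit γ.det ∧ ∀ i j, γ.toBlocks₂₁ i j ∈ I}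

variable {I : Ideal R} {γ : Matrix (m ⊕ n) (m ⊕ n) R}

theorem map_mem_parahoric {J : Ideal S} {f : R →+* S} (hIJ : I ≤ J.comap f)
    (hγ : γ ∈ parahoric m n I) : γ.map f ∈ parahoric m n J := by
  refine ⟨?_, fun i j => hIJ (hγ.2 i j)⟩
  rw [← RingHom.mapMatrix_apply, ← RingHom.map_det]
  exact hγ.1.map f

theorem isUnit_det_toBlocks₁₁_of_toBlocks₂₁_eq_zero (hγ : IsUnit γ.det)
    (hc : γ.toBlocks₂₁ = 0) : IsUnit γ.toBlocks₁₁.det := by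
  rw [← fromBlocks_toBlocks γ, hc, det_fromBlocks_zero₂₁] at hγ
  exact isUnit_of_mul_isUnit_left hγ

theorem isUnit_det_moebiusDenom (hI : I ≤ Ideal.jacobson ⊥) (hγ : γ ∈ parahoric m n I)
    (z : Matrix m n R) : IsUnit (moebiusDenom z γ).det := by
  have := isLocalHom_of_le_jacobson_bot I hI
  obtain ⟨hdet, hc⟩ := map_mem_parahoric (J := ⊥) (f := Ideal.Quotient.mk I)
    (fun x hx => Ideal.Quotient.eq_zero_iff_mem.2 hx) hγ
  have hc₀ : (γ.map (Ideal.Quotient.mk I)).toBlocks₂₁ = 0 := Matrix.ext hc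
  refine isUnit_of_map_unit (Ideal.Quotient.mk I) _ ?_
  rw [← det_moebiusDenom_map, moebiusDenom, hc₀, Matrix.mul_zero, add_zero]
  exact isUnit_det_toBlocks₁₁_of_toBlocks₂₁_eq_zero hdet hc₀

end Parahoric

section UnitBall

variable {C : Type*} [NormedField C] [IsUltrametricDist C]

variable (C) in
/-- The ring of integers `O_C = {x | ‖x‖ ≤ 1}` of a nonarchimedean normed field. -/
noncomputable abbrev unitBall : Subring C :=
  (NormedField.valuation (K := C)).integer

theorem isUnit_unitBall_iff {x : unitBall C} : IsUnit x ↔ ‖(x : C)‖ = 1 :=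
  (Valuation.integer.integers _).isUnit_iff_valuation_eq_one.trans NNReal.coe_eq_one.symm

theorem mem_maximalIdeal_unitBall_iff {x : unitBall C} :
    x ∈ IsLocalRing.maximalIdeal (unitBall C) ↔ ‖(x : C)‖ < 1 :=
  Valuation.Integer.not_isUnit_iff_valuation_lt_one

end UnitBall

theorem statement7_general {m n R C : Type*} [Fintype m] [Fintype n] [DecidableEq m]
    [DecidableEq n] [CommRing R] [NormedField C] [IsUltrametricDist C] (ι : R →+* C)
    (hι : ∀ x, ‖ι x‖ ≤ 1) (I : Ideal R) (hI : I ≤ Ideal.jacobson ⊥) (hιI : ∀ x ∈ I, ‖ι x‖ < 1)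
    (r : ℝ≥0) (z : Matrix m n C) (hzint : ∀ i j, ‖z i j‖ ≤ 1) (z₀ : Matrix m n R)
    (hz : ∀ i j, ‖z i j - ι (z₀ i j)‖ ≤ r) :
    (∀ γ ∈ parahoric m n I,
      (∀ i j, ‖moebiusDenom z (γ.map ι) i j‖ ≤ 1) ∧ ‖(moebiusDenom z (γ.map ι)).det‖ = 1) ∧
    (∀ γ ∈ parahoric m n I,
      (∀ i j, ‖moebius z (γ.map ι) i j‖ ≤ 1) ∧
        ∃ z₀' : Matrix m n R, ∀ i j, ‖moebius z (γ.map ι) i j - ι (z₀' i j)‖ ≤ r) ∧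
    ∀ γ ∈ parahoric m n I, ∀ γ' ∈ parahoric m n I,
      moebius (moebius z (γ.map ι)) (γ'.map ι) = moebius z ((γ * γ').map ι) := by
  let φ : R →+* unitBall C := ι.codRestrict (unitBall C) hι
  obtain ⟨Z, rfl⟩ : ∃ Z : Matrix m n (unitBall C), Z.map (unitBall C).subtype = z :=
    ⟨.of fun i j => ⟨z i j, hzint i j⟩, rfl⟩
  have hdet {γ} (hγ : γ ∈ parahoric m n I) (Y : Matrix m n (unitBall C)) :
      IsUnit (moebiusDenom Y (γ.map φ)).det :=
    isUnit_det_moebiusDenom (IsLocalRing.maximalIdeal_le_jacobson ⊥)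
      (map_mem_parahoric (fun x hx => mem_maximalIdeal_unitBall_iff.2 (hιI x hx)) hγ) Y
  have hmap (γ : Matrix (m ⊕ n) (m ⊕ n) R) : γ.map ι = (γ.map φ).map (unitBall C).subtype := rfl
  refine ⟨fun γ hγ => ?_, fun γ hγ => ?_, fun γ hγ γ' _ => ?_⟩
  · rw [hmap, det_moebiusDenom_map, ← map_moebiusDenom]
    exact ⟨fun i j => (moebiusDenom Z (γ.map φ) i j).2,
      isUnit_unitBall_iff.1 (hdet hγ Z)⟩
  · rw [hmap, ← map_moebius _ (hdet hγ Z)]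
    refine ⟨fun i j => (moebius Z (γ.map φ) i j).2, moebius z₀ γ, ?_⟩
    have hz₀ : (moebius z₀ γ).map φ = moebius (z₀.map φ) (γ.map φ) :=
      map_moebius φ (isUnit_det_moebiusDenom hI hγ z₀)
    have hclose := moebius_sub_moebius_mem
      (K := Valuation.leIdeal NormedField.valuation r) (hdet hγ Z) (hdet hγ (z₀.map φ)) hz
    rw [← hz₀] at hclose
    exact hclose
  · have hdetC : IsUnit (moebiusDenom (Z.map (unitBall C).subtype) (γ.map ι)).det := by
      rw [hmap, det_moebiusDenom_map]
      exact (hdet hγ Z).map _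
    rw [moebius_moebius hdetC, Matrix.map_mul]

theorem IwGSp_subset_parahoric (p g : ℕ) [Fact p.Prime] :
    IwGSp p g ⊆ parahoric (Fin g) (Fin g) (IsLocalRing.maximalIdeal ℤ_[p]) := by
  intro γ hγ
  refine ⟨hγ.1.1, fun i j => ?_⟩
  rw [PadicInt.maximalIdeal_eq_span_p, Ideal.mem_span_singleton]
  exact hγ.2 (Sum.inr i) (Sum.inl j) (by simp only [idx, Sum.elim_inl, Sum.elim_inr]; omega)

theorem statement7 (p g : ℕ) [Fact p.Prime] (hg : 1 ≤ g) (C : Type*)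
    [NormedField C] [CompleteSpace C] [IsUltrametricDist C] (ι : ℤ_[p] →+* C)
    (hι : ∀ x : ℤ_[p], ‖ι x‖ = ‖x‖) (w : ℚ) (hw : 0 < w)
    (z : Matrix (Fin g) (Fin g) C) (hzint : ∀ i j, ‖z i j‖ ≤ 1)
    (z₀ : Matrix (Fin g) (Fin g) ℤ_[p])
    (hz : ∀ i j, ‖z i j - ι (z₀ i j)‖ ≤ pw p w) :
    (∀ γ ∈ IwGSp p g,
      (∀ i j, ‖((γ.toBlocks₁₁.map fun x => ι x) +
          z * (γ.toBlocks₂₁.map fun x => ι x)) i j‖ ≤ 1) ∧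
        ‖((γ.toBlocks₁₁.map fun x => ι x) +
          z * (γ.toBlocks₂₁.map fun x => ι x)).det‖ = 1) ∧
    (∀ γ ∈ IwGSp p g,
      (∀ i j, ‖zAct p g C ι z γ i j‖ ≤ 1) ∧
        ∃ z₀' : Matrix (Fin g) (Fin g) ℤ_[p],
          ∀ i j, ‖zAct p g C ι z γ i j - ι (z₀' i j)‖ ≤ pw p w) ∧
    ∀ γ ∈ IwGSp p g, ∀ γ' ∈ IwGSp p g,
      zAct p g C ι (zAct p g C ι z γ) γ' = zAct p g C ι z (γ * γ') := by
  obtain ⟨hdenom, hact, hmul⟩ := statement7_general ι (fun x => (hι x).trans_le x.norm_le_one)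
    (IsLocalRing.maximalIdeal ℤ_[p]) (IsLocalRing.maximalIdeal_le_jacobson ⊥)
    (fun x hx => (hι x).trans_lt (PadicInt.mem_nonunits.1 hx))
    ⟨pw p w, Real.rpow_nonneg p.cast_nonneg _⟩ z hzint z₀ hz
  have hIw := IwGSp_subset_parahoric p g
  exact ⟨fun γ hγ => hdenom γ (hIw hγ), fun γ hγ => hact γ (hIw hγ),
    fun γ hγ γ' hγ' => hmul γ (hIw hγ) γ' (hIw hγ')⟩
end

section
/- Let w ∈ ℚ_{>0} and let z ∈ M_g(O_C) be such that there exists z₀ ∈ M_g(ℤ_p) with |z_{ij} − (z₀)_{ij}| ≤ p^{−w} for all i, j. Then for every γ ∈ Iw⁺_{GSp_{2g}} one has γ_a + zγ_c ∈ Iw^{+,(w)}_{GL_g}, i.e. there exists λ' ∈ Iw⁺_{GL_g} with |(γ_a + zγ_c)_{ij} − λ'_{ij}| ≤ p^{−w} for all i, j. -/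
open Matrix

/-! If `c ≡ 0` modulo an ideal contained in the Jacobson radical, then `γ` is block upper
triangular modulo that ideal, so `det a` is a unit as soon as `det γ` is. Multiplying `γ` on the
left by the unipotent matrix `[[1, z₀], [0, 1]]` leaves `c` unchanged and replaces `a` by
`a + z₀ c`, which is therefore invertible; it has the same reduction as `a`. It approximates
`a + z c` as well as `z₀` approximates `z`, because each entry of the difference `(z - z₀) c` is a
sum of products of an entry of `z - z₀` with an integral element, and the norm is ultrametric. -/

section BlockMatrix

variable {m n R : Type*} [Fintype m] [Fintype n] [DecidableEq m] [DecidableEq n] [CommRing R]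
  {I : Ideal R} {γ : Matrix (m ⊕ n) (m ⊕ n) R}

theorem isUnit_det_toBlocks₁₁_of_mem_jacobson (hI : I ≤ Ideal.jacobson ⊥) (hγ : IsUnit γ.det)
    (hc : ∀ i j, γ.toBlocks₂₁ i j ∈ I) : IsUnit γ.toBlocks₁₁.det := by
  have := isLocalHom_of_le_jacobson_bot I hI
  let π := Ideal.Quotient.mk I
  have hc_map : γ.toBlocks₂₁.map π = 0 := by
    ext i j
    exact Ideal.Quotient.eq_zero_iff_mem.mpr (hc i j)
  have hdet : π γ.det = π γ.toBlocks₁₁.det * π γ.toBlocks₂₂.det := by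
    conv_lhs => rw [← fromBlocks_toBlocks γ]
    simp only [RingHom.map_det, RingHom.mapMatrix_apply, fromBlocks_map, hc_map,
      det_fromBlocks_zero₂₁]
  exact isUnit_of_map_unit π _ (isUnit_of_mul_isUnit_left (hdet ▸ hγ.map π))

theorem isUnit_det_toBlocks₁₁_add_mul_toBlocks₂₁ (hI : I ≤ Ideal.jacobson ⊥) (hγ : IsUnit γ.det)
    (hc : ∀ i j, γ.toBlocks₂₁ i j ∈ I) (z : Matrix m n R) :
    IsUnit (γ.toBlocks₁₁ + z * γ.toBlocks₂₁).det := by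
  have hmul : fromBlocks 1 z 0 1 * γ = fromBlocks (γ.toBlocks₁₁ + z * γ.toBlocks₂₁)
      (γ.toBlocks₁₂ + z * γ.toBlocks₂₂) γ.toBlocks₂₁ γ.toBlocks₂₂ := by
    conv_lhs => rw [← fromBlocks_toBlocks γ]
    simp only [fromBlocks_multiply, Matrix.one_mul, Matrix.zero_mul, zero_add]
  have hdet : IsUnit (fromBlocks 1 z 0 1 * γ).det := by
    simpa only [det_mul, det_fromBlocks_zero₂₁, det_one, one_mul] using hγ
  rw [hmul] at hdet
  simpa only [toBlocks_fromBlocks₁₁] using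
    isUnit_det_toBlocks₁₁_of_mem_jacobson hI hdet (by simpa only [toBlocks_fromBlocks₂₁] using hc)

end BlockMatrix

theorem add_mul_apply_mem_of_right {l m n R : Type*} [Fintype m] [Semiring R] {I : Ideal R}
    {A : Matrix l n R} {B : Matrix m n R} (z : Matrix l m R) {i : l} {j : n} (hA : A i j ∈ I)
    (hB : ∀ k, B k j ∈ I) : (A + z * B) i j ∈ I := by
  rw [Matrix.add_apply, mul_apply]
  exact I.add_mem hA (I.sum_mem fun k _ => I.mul_mem_left _ (hB k))

section Approximation

variable {l m n C : Type*} [Fintype m] [SeminormedRing C] [IsUltrametricDist C] {r : ℝ}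

theorem norm_mul_apply_le_of_norm_le_one {X : Matrix l m C} {Y : Matrix m n C} (hr : 0 ≤ r)
    (hX : ∀ i k, ‖X i k‖ ≤ r) (hY : ∀ k j, ‖Y k j‖ ≤ 1) (i : l) (j : n) :
    ‖(X * Y) i j‖ ≤ r := by
  rw [mul_apply]
  refine IsUltrametricDist.norm_sum_le_of_forall_le_of_nonneg hr fun k _ => ?_
  calc
    ‖X i k * Y k j‖ ≤ ‖X i k‖ * ‖Y k j‖ := norm_mul_le _ _
    _ ≤ r * 1 := mul_le_mul (hX i k) (hY k j) (norm_nonneg _) hr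
    _ = r := mul_one r

theorem norm_map_add_mul_map_sub_map_apply_le {R : Type*} [NonAssocSemiring R] {ι : R →+* C}
    (hι : ∀ x, ‖ι x‖ ≤ 1) (hr : 0 ≤ r) {z : Matrix l m C} {z₀ : Matrix l m R}
    (hz : ∀ i k, ‖z i k - ι (z₀ i k)‖ ≤ r) (A : Matrix l n R) (B : Matrix m n R)
    (i : l) (j : n) : ‖(A.map ι + z * B.map ι) i j - ι ((A + z₀ * B) i j)‖ ≤ r := by
  have hdiff : A.map ι + z * B.map ι - (A + z₀ * B).map ι = (z - z₀.map ι) * B.map ι := by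
    rw [Matrix.map_add ι (map_add ι), Matrix.map_mul, add_sub_add_left_eq_sub, Matrix.sub_mul]
  calc
    ‖(A.map ι + z * B.map ι) i j - ι ((A + z₀ * B) i j)‖
        = ‖((z - z₀.map ι) * B.map ι) i j‖ := by rw [← hdiff, Matrix.sub_apply, map_apply]
    _ ≤ r := norm_mul_apply_le_of_norm_le_one hr hz (fun k j => hι (B k j)) i j

end Approximation

theorem statement8_general {m n R C : Type*} [Fintype m] [Fintype n] [DecidableEq m]
    [DecidableEq n] [CommRing R] [SeminormedRing C] [IsUltrametricDist C] {ι : R →+* C}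
    (hι : ∀ x, ‖ι x‖ ≤ 1) {r : ℝ} (hr : 0 ≤ r) {z : Matrix m n C} {z₀ : Matrix m n R}
    (hz : ∀ i j, ‖z i j - ι (z₀ i j)‖ ≤ r) {I : Ideal R} (hI : I ≤ Ideal.jacobson ⊥)
    {γ : Matrix (m ⊕ n) (m ⊕ n) R} (hγ : IsUnit γ.det)
    (hc : ∀ i j, γ.toBlocks₂₁ i j ∈ I) (ha : ∀ i j, i ≠ j → γ.toBlocks₁₁ i j ∈ I) :
    ∃ l' : Matrix m m R, (IsUnit l'.det ∧ ∀ i j, i ≠ j → l' i j ∈ I) ∧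
      ∀ i j, ‖(γ.toBlocks₁₁.map ι + z * γ.toBlocks₂₁.map ι) i j - ι (l' i j)‖ ≤ r :=
  ⟨γ.toBlocks₁₁ + z₀ * γ.toBlocks₂₁,
    ⟨isUnit_det_toBlocks₁₁_add_mul_toBlocks₂₁ hI hγ hc z₀,
      fun i j hij => add_mul_apply_mem_of_right z₀ (ha i j hij) (hc · j)⟩,
    norm_map_add_mul_map_sub_map_apply_le hι hr hz _ _⟩

theorem statement8 (p g : ℕ) [Fact p.Prime] (hg : 1 ≤ g) (C : Type*)
    [NormedField C] [CompleteSpace C] [IsUltrametricDist C] (ι : ℤ_[p] →+* C)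
    (hι : ∀ x : ℤ_[p], ‖ι x‖ = ‖x‖) (w : ℚ) (hw : 0 < w)
    (z : Matrix (Fin g) (Fin g) C) (hzint : ∀ i j, ‖z i j‖ ≤ 1)
    (z₀ : Matrix (Fin g) (Fin g) ℤ_[p])
    (hz : ∀ i j, ‖z i j - ι (z₀ i j)‖ ≤ pw p w) :
    ∀ γ ∈ IwGSpPlus p g, ∃ l' ∈ IwGLplus p g,
      ∀ i j, ‖((γ.toBlocks₁₁.map fun x => ι x) +
        z * (γ.toBlocks₂₁.map fun x => ι x)) i j - ι (l' i j)‖ ≤ pw p w := by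
  rintro γ ⟨⟨hdet, -⟩, hc, ha, -⟩
  have hp : Ideal.span {(p : ℤ_[p])} ≤ Ideal.jacobson ⊥ :=
    PadicInt.maximalIdeal_eq_span_p (p := p) ▸ IsLocalRing.maximalIdeal_le_jacobson ⊥
  simp only [IwGLplus, Set.mem_ofPred_eq, ← Ideal.mem_span_singleton] at hc ha ⊢
  exact statement8_general (fun x => (hι x).trans_le x.norm_le_one)
    (Real.rpow_nonneg p.cast_nonneg _) hz hp hdet hc ha
end

section
/- The map (γ, υ) ↦ [[γ, 0],[υ, J̆ ᵗγ^{−1} J̆]] is a well-defined injection from T_0 into Iw_{GSp_{2g}}, and every matrix in its image has similitude factor 1 (i.e. lies in Sp_{2g}(ℤ_p)). -/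
open Matrix

/-- The set `T₀` of pairs `(γ, υ)` with `γ ∈ Iw_{GL_g}`, `υ ∈ M_g(pℤ_p)` and
`ᵗγ J̆ υ = ᵗυ J̆ γ`. -/
def T0set (p g : ℕ) [Fact p.Prime] :
    Set (Matrix (Fin g) (Fin g) ℤ_[p] × Matrix (Fin g) (Fin g) ℤ_[p]) :=
  {x | x.1 ∈ IwGL p g ∧ (∀ i j : Fin g, (p : ℤ_[p]) ∣ x.2 i j) ∧
    x.1ᵀ * Jb g ℤ_[p] * x.2 = x.2ᵀ * Jb g ℤ_[p] * x.1}

/-- The map `(γ, υ) ↦ [[γ, 0], [υ, J̆ ᵗγ⁻¹ J̆]]`. -/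
noncomputable def Phi (p g : ℕ) [Fact p.Prime]
    (x : Matrix (Fin g) (Fin g) ℤ_[p] × Matrix (Fin g) (Fin g) ℤ_[p]) :
    Matrix (Fin g ⊕ Fin g) (Fin g ⊕ Fin g) ℤ_[p] :=
  Matrix.fromBlocks x.1 0 x.2 (Jb g ℤ_[p] * (x.1⁻¹)ᵀ * Jb g ℤ_[p])

/-!
Block computation turns `ᵗM J M = J` for `M = [[γ, 0], [υ, δ]]` into the two conditions
`ᵗγ J̆ υ = ᵗυ J̆ γ` and `ᵗγ J̆ δ = J̆`; the first defines `T₀`, and `J̆² = 1` makes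
`δ = J̆ ᵗγ⁻¹ J̆` satisfy the second. Reducing modulo an ideal shows that `γ⁻¹` is again upper
triangular modulo that ideal; transposing makes it lower triangular, and conjugating by `J̆`,
which reverses rows and columns, makes it upper triangular again.
-/

section BlockTriangularMod

variable {R m α : Type*} [CommRing R]

/-- Block triangularity modulo an ideal `I`, with respect to the labelling `b` of the indices.
For `I = (p)` and an injective labelling it says that the reduction mod `p` is upper triangular,
the condition defining the Iwahori subgroups. -/
def BlockTriangularMod [LT α] (I : Ideal R) (b : m → α) (M : Matrix m m R) : Prop :=
  ∀ ⦃i j⦄, b j < b i → M i j ∈ I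

theorem blockTriangularMod_iff_blockTriangular_map [LT α] {I : Ideal R} {b : m → α}
    {M : Matrix m m R} :
    BlockTriangularMod I b M ↔ (M.map (Ideal.Quotient.mk I)).BlockTriangular b := by
  simp only [BlockTriangularMod, BlockTriangular, map_apply, Ideal.Quotient.eq_zero_iff_mem]

theorem BlockTriangularMod.inv [LinearOrder α] [Fintype m] [DecidableEq m] {I : Ideal R}
    {b : m → α} {M : Matrix m m R} (hM : BlockTriangularMod I b M) (hdet : IsUnit M.det) :
    BlockTriangularMod I b M⁻¹ := by
  rw [blockTriangularMod_iff_blockTriangular_map] at hM ⊢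
  have hright : M.map (Ideal.Quotient.mk I) * M⁻¹.map (Ideal.Quotient.mk I) = 1 := by
    rw [← Matrix.map_mul, mul_nonsing_inv M hdet, Matrix.map_one _ (map_zero _) (map_one _)]
  let := invertibleOfRightInverse _ _ hright
  exact inv_eq_right_inv hright ▸ blockTriangular_inv_of_blockTriangular hM

end BlockTriangularMod

section Symplectic

variable {R n : Type*} [CommRing R] [Fintype n]

theorem isUnit_det_of_transpose_mul_mul_eq [DecidableEq n] {J M : Matrix n n R}
    (hJ : IsUnit J.det) (hM : Mᵀ * J * M = J) : IsUnit M.det := by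
  rw [← hM, det_mul] at hJ
  exact isUnit_of_mul_isUnit_right hJ

theorem fromBlocks_zero₁₂_transpose_mul_mul_eq_iff {S γ υ δ : Matrix n n R} (hS : Sᵀ = S) :
    (fromBlocks γ 0 υ δ)ᵀ * fromBlocks 0 (-S) S 0 * fromBlocks γ 0 υ δ = fromBlocks 0 (-S) S 0 ↔
      γᵀ * S * υ = υᵀ * S * γ ∧ γᵀ * S * δ = S := by
  have htranspose : δᵀ * S * γ = S ↔ γᵀ * S * δ = S := by
    rw [← transpose_inj]
    simp only [transpose_mul, transpose_transpose, hS, Matrix.mul_assoc]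
  simp only [fromBlocks_transpose, fromBlocks_multiply, fromBlocks_inj, transpose_zero,
    Matrix.mul_zero, Matrix.zero_mul, Matrix.mul_neg, Matrix.neg_mul, zero_add, add_zero,
    neg_zero, neg_inj, htranspose, add_neg_eq_zero, and_true, and_self]
  exact and_congr_left fun _ => eq_comm

/-- The matrix `[[γ, 0], [υ, S ᵗγ⁻¹ S]]`, which for `S = J̆` lies in the opposite Siegel parabolic
of the symplectic group whenever `γ` is invertible and `ᵗγ S υ` is symmetric. -/
noncomputable def oppSiegel [DecidableEq n] (S γ υ : Matrix n n R) : Matrix (n ⊕ n) (n ⊕ n) R :=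
  fromBlocks γ 0 υ (S * (γ⁻¹)ᵀ * S)

theorem oppSiegel_injective2 [DecidableEq n] (S : Matrix n n R) :
    Function.Injective2 (oppSiegel S) := fun _ _ _ _ h =>
  have ⟨hγ, _, hυ, _⟩ := fromBlocks_inj.1 h
  ⟨hγ, hυ⟩

theorem oppSiegel_transpose_mul_mul [DecidableEq n] {S γ υ : Matrix n n R} (hS : Sᵀ = S)
    (hSS : S * S = 1) (hγ : IsUnit γ.det) (hυ : γᵀ * S * υ = υᵀ * S * γ) :
    (oppSiegel S γ υ)ᵀ * fromBlocks 0 (-S) S 0 * oppSiegel S γ υ = fromBlocks 0 (-S) S 0 := by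
  refine (fromBlocks_zero₁₂_transpose_mul_mul_eq_iff hS).2 ⟨hυ, ?_⟩
  calc γᵀ * S * (S * (γ⁻¹)ᵀ * S)
      = γᵀ * (S * S) * (γ⁻¹)ᵀ * S := by simp only [Matrix.mul_assoc]
    _ = (γ⁻¹ * γ)ᵀ * S := by rw [hSS, Matrix.mul_one, transpose_mul]
    _ = S := by rw [nonsing_inv_mul γ hγ, transpose_one, Matrix.one_mul]

end Symplectic

section AntiDiagonal

variable {g : ℕ} {R : Type*} [CommRing R]

theorem Jb_eq_permMatrix : Jb g R = Fin.revPerm.permMatrix R := by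
  ext i j
  have hrev : (i : ℕ) + j + 1 = g ↔ i.rev = j := by
    rw [Fin.ext_iff, Fin.val_rev]
    lia
  simp [Jb, PEquiv.toMatrix_apply, hrev]

theorem Jb_transpose : (Jb g R)ᵀ = Jb g R := by
  rw [Jb_eq_permMatrix, transpose_permMatrix]
  rfl

theorem Jb_mul_mul_Jb (M : Matrix (Fin g) (Fin g) R) :
    Jb g R * M * Jb g R = M.submatrix Fin.rev Fin.rev := by
  rw [Jb_eq_permMatrix, PEquiv.toMatrix_toPEquiv_mul, PEquiv.mul_toMatrix_toPEquiv]
  rfl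

theorem Jb_mul_Jb : Jb g R * Jb g R = 1 := by
  simpa [submatrix_one _ Fin.rev_injective] using Jb_mul_mul_Jb (1 : Matrix (Fin g) (Fin g) R)

theorem isUnit_det_Jmat : IsUnit (Jmat g R).det := by
  refine isUnit_det_of_left_inverse (B := -Jmat g R) ?_
  simp [Jmat, fromBlocks_neg, fromBlocks_multiply, Jb_mul_Jb]

theorem isGSp_of_transpose_mul_Jmat_mul_eq {M : Matrix (Fin g ⊕ Fin g) (Fin g ⊕ Fin g) R}
    (hM : Mᵀ * Jmat g R * M = Jmat g R) : IsGSp M :=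
  ⟨isUnit_det_of_transpose_mul_mul_eq isUnit_det_Jmat hM, 1, by rw [hM, Units.val_one, one_smul]⟩

theorem BlockTriangularMod.Jb_mul_transpose_mul_Jb {I : Ideal R} {M : Matrix (Fin g) (Fin g) R}
    (hM : BlockTriangularMod I id M) : BlockTriangularMod I id (Jb g R * Mᵀ * Jb g R) := by
  intro i j hji
  rw [Jb_mul_mul_Jb]
  exact hM (Fin.rev_lt_rev.2 hji)

theorem BlockTriangularMod.fromBlocks_idx {I : Ideal R} {A B C D : Matrix (Fin g) (Fin g) R}
    (hA : BlockTriangularMod I id A) (hC : ∀ i j, C i j ∈ I) (hD : BlockTriangularMod I id D) :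
    BlockTriangularMod I idx (fromBlocks A B C D) := by
  rintro (i | i) (j | j) hji
  · exact hA hji
  · simp only [idx, Sum.elim_inl, Sum.elim_inr] at hji
    lia
  · exact hC i j
  · exact hD (Nat.lt_of_add_lt_add_left hji)

end AntiDiagonal

theorem statement10_general {g : ℕ} {R : Type*} [CommRing R] (I : Ideal R) :
    (∀ γ υ : Matrix (Fin g) (Fin g) R, IsUnit γ.det → BlockTriangularMod I id γ →
      (∀ i j, υ i j ∈ I) → γᵀ * Jb g R * υ = υᵀ * Jb g R * γ →
      (IsGSp (oppSiegel (Jb g R) γ υ) ∧ BlockTriangularMod I idx (oppSiegel (Jb g R) γ υ)) ∧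
        (oppSiegel (Jb g R) γ υ)ᵀ * Jmat g R * oppSiegel (Jb g R) γ υ = Jmat g R) ∧
    Function.Injective2 (oppSiegel (Jb g R)) := by
  refine ⟨fun γ υ hdet hγ hυ hsymm => ?_, oppSiegel_injective2 _⟩
  have hsymplectic := oppSiegel_transpose_mul_mul Jb_transpose Jb_mul_Jb hdet hsymm
  have hδ := (hγ.inv hdet).Jb_mul_transpose_mul_Jb
  exact ⟨⟨isGSp_of_transpose_mul_Jmat_mul_eq hsymplectic, hγ.fromBlocks_idx hυ hδ⟩, hsymplectic⟩

theorem statement10 (p g : ℕ) [Fact p.Prime] (hg : 1 ≤ g) :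
    (∀ x ∈ T0set p g,
      Phi p g x ∈ IwGSp p g ∧
        (Phi p g x)ᵀ * Jmat g ℤ_[p] * Phi p g x = Jmat g ℤ_[p]) ∧
    ∀ x ∈ T0set p g, ∀ y ∈ T0set p g, Phi p g x = Phi p g y → x = y := by
  have ⟨hmem, hinj⟩ := statement10_general (g := g) (Ideal.span {(p : ℤ_[p])})
  simp only [BlockTriangularMod, Ideal.mem_span_singleton] at hmem
  exact ⟨fun x ⟨⟨hdet, hγ⟩, hυ, hsymm⟩ => hmem x.1 x.2 hdet hγ hυ hsymm,
    fun _ _ _ _ h => Prod.ext_iff.2 (hinj h)⟩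
end

section
/- For every 1 ≤ i ≤ g and every (γ, υ) ∈ T_00, the pair (u^{□}_{p,i} γ u^{□,−1}_{p,i}, u^{■}_{p,i} υ u^{□,−1}_{p,i}), a priori with entries in ℚ_p, has all entries in ℤ_p and again lies in T_00. -/
/-!
The two diagonal matrices are `D = diag(p ^ d j)` and `E = diag(p ^ e j)` for exponents with
`d j + e (g - 1 - j)` constant, which says `ᵗD J̆ E = p ^ c • J̆`. Substituting
`γ' D = D γ` and `υ' D = E υ` gives `ᵗD (ᵗγ' J̆ υ') D = p ^ c • ᵗγ J̆ υ`; the condition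
`ᵗγ J̆ υ = ᵗυ J̆ γ` is the symmetry of `ᵗγ J̆ υ`, and it survives cancelling `D`. Integrality of
`υ'` holds because every `d k` is at most every `e j`; that of `γ'` because `γ` is lower
triangular and `d` is monotone.
-/

open Matrix

/-- The subset `T₀₀ ⊆ T₀` of pairs whose first component lies in `U^{opp}_{GL_g,1}`. -/
def T00set (p g : ℕ) [Fact p.Prime] :
    Set (Matrix (Fin g) (Fin g) ℤ_[p] × Matrix (Fin g) (Fin g) ℤ_[p]) :=
  {x | x ∈ T0set p g ∧ x.1 ∈ UGLopp1 p g}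

/-- Entrywise inclusion `M(ℤ_p) → M(ℚ_p)`. -/
def toQ {p : ℕ} [Fact p.Prime] {m n : Type*} (M : Matrix m n ℤ_[p]) :
    Matrix m n ℚ_[p] :=
  M.map fun x => (x : ℚ_[p])

/-- The diagonal matrix `u^{□}_{p,i} = diag(1_i, p·1_{g-i})`. -/
noncomputable def uSq (p g : ℕ) [Fact p.Prime] (i : ℕ) : Matrix (Fin g) (Fin g) ℚ_[p] :=
  Matrix.diagonal fun j => if (j : ℕ) < i then 1 else (p : ℚ_[p])

/-- The diagonal matrix `u^{■}_{p,i}`: equal to `diag(p·1_{g-i}, p²·1_i)` for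
`1 ≤ i ≤ g - 1`, and to `p·1_g` for `i = g`. -/
noncomputable def uBl (p g : ℕ) [Fact p.Prime] (i : ℕ) : Matrix (Fin g) (Fin g) ℚ_[p] :=
  if i = g then Matrix.diagonal fun _ => (p : ℚ_[p])
  else Matrix.diagonal fun j => if (j : ℕ) < g - i then (p : ℚ_[p]) else (p : ℚ_[p]) ^ 2

section Similitude

variable {n R : Type*} [Fintype n] [CommSemiring R]

theorem isSymm_of_isSymm_transpose_mul_mul {A D : Matrix n n R} (hD : IsRightRegular D)
    (h : (Dᵀ * A * D).IsSymm) : A.IsSymm := by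
  have hcancel : Dᵀ * Aᵀ = Dᵀ * A := hD <| by
    simpa only [transpose_mul, transpose_transpose, Matrix.mul_assoc] using h.eq
  have hmul : A * D = Aᵀ * D := by
    simpa only [transpose_mul, transpose_transpose] using congrArg transpose hcancel
  exact (hD hmul).symm

theorem isSymm_transpose_mul_mul_of_intertwine {J D E A A' B B' : Matrix n n R} {s : R}
    (hD : IsRightRegular D) (hJ : Dᵀ * J * E = s • J) (hA : A' * D = D * A) (hB : B' * D = E * B)
    (h : (Aᵀ * J * B).IsSymm) : (A'ᵀ * J * B').IsSymm := by
  apply isSymm_of_isSymm_transpose_mul_mul hD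
  have key : Dᵀ * (A'ᵀ * J * B') * D = s • (Aᵀ * J * B) :=
    calc Dᵀ * (A'ᵀ * J * B') * D = (A' * D)ᵀ * J * (B' * D) := by
          simp only [transpose_mul, Matrix.mul_assoc]
      _ = Aᵀ * (Dᵀ * J * E) * B := by
          rw [hA, hB]
          simp only [transpose_mul, Matrix.mul_assoc]
      _ = s • (Aᵀ * J * B) := by rw [hJ, Matrix.mul_smul, Matrix.smul_mul]
  exact key ▸ h.smul s

theorem isRightRegular_diagonal [DecidableEq n] {v : n → R} (hv : ∀ j, IsRightRegular (v j)) :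
    IsRightRegular (diagonal v) := by
  intro A B h
  ext j k
  exact hv k (by simpa only [mul_diagonal] using congrFun₂ h j k)

end Similitude

section DiagTwist

variable {m n R : Type*} [CommSemiring R]

/-- The matrix `diag(ϖ ^ e) * M * diag(ϖ ^ d)⁻¹` with entries kept in `R`. The subtraction of
exponents truncates, so this is the intended matrix only if `M j k = 0` whenever `e j < d k`. -/
def diagTwist (ϖ : R) (e : m → ℕ) (d : n → ℕ) (M : Matrix m n R) : Matrix m n R :=
  of fun j k => ϖ ^ (e j - d k) * M j k

theorem diagTwist_apply (ϖ : R) (e : m → ℕ) (d : n → ℕ) (M : Matrix m n R) (j : m) (k : n) :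
    diagTwist ϖ e d M j k = ϖ ^ (e j - d k) * M j k :=
  rfl

variable [Fintype m] [Fintype n] [DecidableEq m] [DecidableEq n]

theorem diagTwist_mul_diagonal (ϖ : R) {e : m → ℕ} {d : n → ℕ} {M : Matrix m n R}
    (hM : ∀ j k, e j < d k → M j k = 0) :
    diagTwist ϖ e d M * diagonal (fun k => ϖ ^ d k) = diagonal (fun j => ϖ ^ e j) * M := by
  ext j k
  rw [mul_diagonal, diagonal_mul, diagTwist_apply]
  rcases lt_or_ge (e j) (d k) with hlt | hle
  · rw [hM j k hlt, mul_zero, mul_zero, zero_mul]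
  · rw [mul_right_comm, pow_sub_mul_pow ϖ hle]

theorem map_diagTwist {K : Type*} [Field K] (f : R →+* K) {ϖ : R} (hϖ : f ϖ ≠ 0)
    {e : m → ℕ} {d : n → ℕ} {M : Matrix m n R} (hM : ∀ j k, e j < d k → M j k = 0) :
    (diagTwist ϖ e d M).map f =
      diagonal (fun j => f ϖ ^ e j) * M.map f * (diagonal fun k => f ϖ ^ d k)⁻¹ := by
  have hmap : (diagTwist ϖ e d M).map f * diagonal (fun k => f ϖ ^ d k) =
      diagonal (fun j => f ϖ ^ e j) * M.map f := by
    simpa only [Matrix.map_mul, diagonal_map (map_zero f), Function.comp_def, map_pow] using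
      congrArg (fun N => N.map f) (diagTwist_mul_diagonal ϖ hM)
  have hdet : IsUnit (diagonal fun k => f ϖ ^ d k).det := by
    rw [det_diagonal, isUnit_iff_ne_zero, Finset.prod_ne_zero_iff]
    exact fun k _ => pow_ne_zero _ hϖ
  rw [← hmap, mul_nonsing_inv_cancel_right _ _ hdet]

end DiagTwist

section AntiDiagonal

variable {g : ℕ} {R : Type*} [CommRing R]

theorem Jb_apply (j k : Fin g) : Jb g R j k = if k = j.rev then 1 else 0 := by
  have hrev : (j : ℕ) + k + 1 = g ↔ k = j.rev := by
    rw [Fin.ext_iff, Fin.val_rev]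
    lia
  simp only [Jb, of_apply, hrev]

theorem isSymm_Jb : (Jb g R).IsSymm :=
  IsSymm.ext fun j k => by simp only [Jb, of_apply, Nat.add_comm (k : ℕ) j]

theorem isSymm_transpose_mul_Jb_mul_iff {A B : Matrix (Fin g) (Fin g) R} :
    (Aᵀ * Jb g R * B).IsSymm ↔ Aᵀ * Jb g R * B = Bᵀ * Jb g R * A := by
  rw [IsSymm, transpose_mul, transpose_mul, transpose_transpose, isSymm_Jb.eq,
    ← Matrix.mul_assoc, eq_comm]

theorem diagonal_pow_mul_Jb_mul_diagonal_pow (ϖ : R) {d e : Fin g → ℕ} {c : ℕ}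
    (hde : ∀ j, d j + e j.rev = c) :
    diagonal (fun j => ϖ ^ d j) * Jb g R * diagonal (fun j => ϖ ^ e j) = ϖ ^ c • Jb g R := by
  ext j k
  rw [mul_diagonal, diagonal_mul, Matrix.smul_apply, smul_eq_mul, Jb_apply]
  split_ifs with hk
  · rw [hk, mul_one, mul_one, ← pow_add, hde]
  · simp only [mul_zero, zero_mul]

end AntiDiagonal

section ContractingAction

variable {p g : ℕ} [Fact p.Prime]

theorem UGLopp1_subset_IwGL : UGLopp1 p g ⊆ IwGL p g := by
  rintro M ⟨hupper, hdiag, hlower⟩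
  have hdet : M.det = 1 := by
    rw [det_of_isLowerTriangular M fun j k hjk => hupper j k hjk]
    exact Finset.prod_eq_one fun j _ => hdiag j
  exact ⟨hdet ▸ isUnit_one, hlower⟩

theorem mem_T00set_iff {x : Matrix (Fin g) (Fin g) ℤ_[p] × Matrix (Fin g) (Fin g) ℤ_[p]} :
    x ∈ T00set p g ↔ x.1 ∈ UGLopp1 p g ∧ (∀ j k, (p : ℤ_[p]) ∣ x.2 j k) ∧
      (x.1ᵀ * Jb g ℤ_[p] * x.2).IsSymm := by
  rw [isSymm_transpose_mul_Jb_mul_iff]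
  exact ⟨fun ⟨⟨_, hυ, hsymm⟩, hγ⟩ => ⟨hγ, hυ, hsymm⟩,
    fun ⟨hγ, hυ, hsymm⟩ => ⟨⟨UGLopp1_subset_IwGL hγ, hυ, hsymm⟩, hγ⟩⟩

theorem eq_zero_of_mem_UGLopp1_of_lt {d : Fin g → ℕ} (hd : Monotone d)
    {γ : Matrix (Fin g) (Fin g) ℤ_[p]} (hγ : γ ∈ UGLopp1 p g) (j k : Fin g) (hjk : d j < d k) :
    γ j k = 0 :=
  hγ.1 j k (hd.reflect_lt hjk)

theorem diagTwist_mem_UGLopp1 (ϖ : ℤ_[p]) (d : Fin g → ℕ) {γ : Matrix (Fin g) (Fin g) ℤ_[p]}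
    (hγ : γ ∈ UGLopp1 p g) : diagTwist ϖ d d γ ∈ UGLopp1 p g := by
  obtain ⟨hupper, hdiag, hlower⟩ := hγ
  refine ⟨fun j k hjk => ?_, fun j => ?_, fun j k hkj => (hlower j k hkj).mul_left _⟩
  · rw [diagTwist_apply, hupper j k hjk, mul_zero]
  · rw [diagTwist_apply, Nat.sub_self, pow_zero, one_mul, hdiag]

theorem diagTwist_mem_T00set {ϖ : ℤ_[p]} (hϖ : ϖ ≠ 0) {d e : Fin g → ℕ} {c : ℕ} (hd : Monotone d)
    (hle : ∀ j k, d k ≤ e j) (hde : ∀ j, d j + e j.rev = c)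
    {x : Matrix (Fin g) (Fin g) ℤ_[p] × Matrix (Fin g) (Fin g) ℤ_[p]} (hx : x ∈ T00set p g) :
    (diagTwist ϖ d d x.1, diagTwist ϖ e d x.2) ∈ T00set p g := by
  obtain ⟨hγ, hυ, hsymm⟩ := mem_T00set_iff.mp hx
  refine mem_T00set_iff.mpr
    ⟨diagTwist_mem_UGLopp1 ϖ d hγ, fun j k => (hυ j k).mul_left _, ?_⟩
  have hregular : IsRightRegular (diagonal fun j => ϖ ^ d j) :=
    isRightRegular_diagonal fun j => (IsRegular.of_ne_zero (pow_ne_zero _ hϖ)).right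
  refine isSymm_transpose_mul_mul_of_intertwine (s := ϖ ^ c) hregular ?_
    (diagTwist_mul_diagonal ϖ (eq_zero_of_mem_UGLopp1_of_lt hd hγ))
    (diagTwist_mul_diagonal ϖ fun j k hlt => absurd hlt (hle j k).not_gt) hsymm
  rw [diagonal_transpose, diagonal_pow_mul_Jb_mul_diagonal_pow ϖ hde]

theorem toQ_diagTwist {e d : Fin g → ℕ} {M : Matrix (Fin g) (Fin g) ℤ_[p]}
    (hM : ∀ j k, e j < d k → M j k = 0) :
    toQ (diagTwist (p : ℤ_[p]) e d M) = diagonal (fun j => (p : ℚ_[p]) ^ e j) * toQ M *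
      (diagonal fun k => (p : ℚ_[p]) ^ d k)⁻¹ := by
  have hp : PadicInt.Coe.ringHom (p : ℤ_[p]) ≠ 0 := by
    rw [map_natCast]
    exact mod_cast (Fact.out : p.Prime).ne_zero
  have h := map_diagTwist PadicInt.Coe.ringHom hp hM
  rwa [map_natCast] at h

theorem statement14_general {d e : Fin g → ℕ} {c : ℕ} (hd : Monotone d)
    (hle : ∀ j k, d k ≤ e j) (hde : ∀ j, d j + e j.rev = c) :
    ∀ x ∈ T00set p g, ∃ γ' υ' : Matrix (Fin g) (Fin g) ℤ_[p],
      toQ γ' = diagonal (fun j => (p : ℚ_[p]) ^ d j) * toQ x.1 *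
        (diagonal fun j => (p : ℚ_[p]) ^ d j)⁻¹ ∧
      toQ υ' = diagonal (fun j => (p : ℚ_[p]) ^ e j) * toQ x.2 *
        (diagonal fun j => (p : ℚ_[p]) ^ d j)⁻¹ ∧
      (γ', υ') ∈ T00set p g := by
  intro x hx
  have hp : (p : ℤ_[p]) ≠ 0 := mod_cast (Fact.out : p.Prime).ne_zero
  exact ⟨diagTwist (p : ℤ_[p]) d d x.1, diagTwist (p : ℤ_[p]) e d x.2,
    toQ_diagTwist (eq_zero_of_mem_UGLopp1_of_lt hd hx.2),
    toQ_diagTwist fun j k hlt => absurd hlt (hle j k).not_gt,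
    diagTwist_mem_T00set hp hd hle hde hx⟩

end ContractingAction

section Exponents

/-- The exponents of `p` on the diagonal of `u^{□}_{p,i}`. -/
def uSqExponent (g i : ℕ) (j : Fin g) : ℕ :=
  if (j : ℕ) < i then 0 else 1

/-- The exponents of `p` on the diagonal of `u^{■}_{p,i}`, including its separate case `i = g`. -/
def uBlExponent (g i : ℕ) (j : Fin g) : ℕ :=
  if i = g ∨ (j : ℕ) < g - i then 1 else 2

theorem uSq_eq_diagonal_pow (p g i : ℕ) [Fact p.Prime] :
    uSq p g i = diagonal fun j => (p : ℚ_[p]) ^ uSqExponent g i j := by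
  simp only [uSq, uSqExponent, pow_ite, pow_zero, pow_one]

theorem uBl_eq_diagonal_pow (p g i : ℕ) [Fact p.Prime] :
    uBl p g i = diagonal fun j => (p : ℚ_[p]) ^ uBlExponent g i j := by
  by_cases hi : i = g
  · simp only [uBl, uBlExponent, hi, true_or, if_true, pow_one]
  · simp only [uBl, uBlExponent, hi, false_or, if_false, pow_ite, pow_one]

theorem monotone_uSqExponent (g i : ℕ) : Monotone (uSqExponent g i) := by
  intro j k hjk
  unfold uSqExponent
  split_ifs <;> lia

theorem uSqExponent_le_uBlExponent (g i : ℕ) (j k : Fin g) :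
    uSqExponent g i k ≤ uBlExponent g i j := by
  unfold uSqExponent uBlExponent
  split_ifs <;> lia

theorem uSqExponent_add_uBlExponent_rev (g i : ℕ) (j : Fin g) :
    uSqExponent g i j + uBlExponent g i j.rev = if i = g then 1 else 2 := by
  unfold uSqExponent uBlExponent
  rw [Fin.val_rev]
  split_ifs <;> lia

end Exponents

theorem statement14 (p g : ℕ) [Fact p.Prime] (hg : 1 ≤ g) (i : ℕ)
    (hi1 : 1 ≤ i) (hig : i ≤ g) :
    ∀ x ∈ T00set p g, ∃ γ' υ' : Matrix (Fin g) (Fin g) ℤ_[p],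
      toQ γ' = uSq p g i * toQ x.1 * (uSq p g i)⁻¹ ∧
      toQ υ' = uBl p g i * toQ x.2 * (uSq p g i)⁻¹ ∧
      (γ', υ') ∈ T00set p g := by
  rw [uSq_eq_diagonal_pow, uBl_eq_diagonal_pow]
  exact statement14_general (monotone_uSqExponent g i) (uSqExponent_le_uBlExponent g i)
    (uSqExponent_add_uBlExponent_rev g i)
end
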